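/- arXiv:2011.01199 — 2 statements merged into one kernel-verified Lean document; each statement's English description precedes it below -/
import Mathlib

section
/- Suppose 3/2 < α < 2. Then for every 1 ≤ i, j ≤ n, the sequence (Ŵ_{ij}(⌊dx⌋))_{d≥1} is a Cauchy sequence in L²(Ω). -/
open MeasureTheory ProbabilityTheory Filter

noncomputable section

/-- Hypotheses (H.1) and (H.2) on the pair `(φ, ψ)`, together with the
parameter constraints `β ∈ (0,1)`, `λ > 0`, `α ∈ (0, 2β]`, `ν ∈ (1,2]`. -/
def SelfSimilarHyp (β lam α ν : ℝ) (φ ψ : ℝ → ℝ) : Prop :=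
  β ∈ Set.Ioo (0 : ℝ) 1 ∧ 0 < lam ∧ α ∈ Set.Ioc (0 : ℝ) (2 * β) ∧
  ν ∈ Set.Ioc (1 : ℝ) 2 ∧
  -- (H.1): φ(y) = −λ(y−1)^α + ψ(y) on [1,∞)
  (∀ y : ℝ, 1 ≤ y → φ y = -lam * (y - 1) ^ α + ψ y) ∧
  -- ψ is twice differentiable on an open set containing [1,∞)
  (∃ S : Set ℝ, IsOpen S ∧ Set.Ici (1 : ℝ) ⊆ S ∧
    ∀ y ∈ S, DifferentiableAt ℝ ψ y ∧ DifferentiableAt ℝ (deriv ψ) y) ∧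
  -- bounds (a), (b) on ψ', ψ''
  (∃ C₀ : ℝ, 0 ≤ C₀ ∧
    (∀ y : ℝ, 1 < y → |deriv ψ y| ≤ C₀ * y ^ (α - 1)) ∧
    (∀ y : ℝ, 1 < y → |deriv (deriv ψ) y| ≤ C₀ * y⁻¹ * (y - 1) ^ (α - 1))) ∧
  -- (c): ψ'(1) = βψ(1) when α ≥ 1
  (1 ≤ α → deriv ψ 1 = β * ψ 1) ∧
  -- (H.2): bounds (d), (e) on φ', φ'' for y ≥ 2
  (∃ C₁ : ℝ, 0 < C₁ ∧ ∀ y : ℝ, 2 ≤ y →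
    ((α < 1 → |deriv φ y| ≤ C₁ * (y - 1) ^ (-ν) ∧
        |deriv (deriv φ) y| ≤ C₁ * (y - 1) ^ (-ν - 1)) ∧
     (1 ≤ α → |deriv φ y| ≤ C₁ * (y - 1) ^ (α - 2) ∧
        |deriv (deriv φ) y| ≤ C₁ * (y - 1) ^ (α - 3))))

/-- The covariance function `R(s,t) = (s∧t)^{2β} φ((s∨t)/(s∧t))` for `s,t > 0`,
and `R(s,t) = 0` if `s = 0` or `t = 0`. -/
def covR (β : ℝ) (φ : ℝ → ℝ) (s t : ℝ) : ℝ :=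
  if s = 0 ∨ t = 0 then 0 else (min s t) ^ (2 * β) * φ (max s t / min s t)

/-- `Δ(k,l) = R(k+1,l+1) − R(k,l+1) − R(k+1,l) + R(k,l)`. -/
def covΔ (β : ℝ) (φ : ℝ → ℝ) (k l : ℕ) : ℝ :=
  covR β φ (k + 1) (l + 1) - covR β φ k (l + 1) - covR β φ (k + 1) l + covR β φ k l

/-- `δ_{kl} = Δ(k,l)/√(Δ(k,k)Δ(l,l))`. -/
def covδ (β : ℝ) (φ : ℝ → ℝ) (k l : ℕ) : ℝ :=
  covΔ β φ k l / Real.sqrt (covΔ β φ k k * covΔ β φ l l)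

/-- For `m ∈ ℤ`, `a_α(m) = (1/2)(|m+1|^α + |m−1|^α − 2|m|^α)`. -/
def aFun (α : ℝ) (m : ℤ) : ℝ :=
  (|(m : ℝ) + 1| ^ α + |(m : ℝ) - 1| ^ α - 2 * |(m : ℝ)| ^ α) / 2

/-- A family of real random variables is centered jointly Gaussian if every finite
real-linear combination of its members has a centered Gaussian law. -/
def IsCenteredGaussianFamily {Ω ι : Type*} [MeasurableSpace Ω] (P : Measure Ω)
    (X : ι → Ω → ℝ) : Prop :=
  ∀ (s : Finset ι) (c : ι → ℝ), ∃ v : NNReal,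
    P.map (fun ω => ∑ i ∈ s, c i * X i ω) = gaussianReal 0 v

/-- The normalized increment `Ŷ^i_k = (X^i_{(k+1)/d} − X^i_{k/d}) / ‖X^i_{(k+1)/d} − X^i_{k/d}‖_{L²(Ω)}`. -/
def hatY {Ω : Type*} [MeasurableSpace Ω] (P : Measure Ω) {n : ℕ}
    (X : Fin n → ℝ → Ω → ℝ) (d : ℕ) (i : Fin n) (k : ℕ) (ω : Ω) : ℝ :=
  (X i (((k : ℝ) + 1) / d) ω - X i ((k : ℝ) / d) ω) /
    Real.sqrt (∫ ω', (X i (((k : ℝ) + 1) / d) ω' - X i ((k : ℝ) / d) ω') ^ 2 ∂P)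

/-- The Wishart matrix entry `Ŵ_{ij}(⌊dx⌋) = d^{1−α} Σ_{k=1}^{⌊dx⌋} (Ŷ^i_k Ŷ^j_k − 1_{i=j})`. -/
def hatW {Ω : Type*} [MeasurableSpace Ω] (P : Measure Ω) {n : ℕ}
    (X : Fin n → ℝ → Ω → ℝ) (α x : ℝ) (d : ℕ) (i j : Fin n) (ω : Ω) : ℝ :=
  (d : ℝ) ^ ((1 : ℝ) - α) * ∑ k ∈ Finset.Icc 1 ⌊(d : ℝ) * x⌋₊,
    (hatY P X d i k ω * hatY P X d j k ω - if i = j then 1 else 0)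

/-!
Isserlis' formula turns `E[Ŵ_{ij}(⌊dx⌋) Ŵ_{ij}(⌊ex⌋)]` into a normalized double sum of squared
correlations of increments, so it suffices that this sum converges as `d, e → ∞` independently.
The covariance of two increments is the integral over a grid cell of the mixed derivative
`∂²R/∂s∂t`, whose only singularity is `O(|s - t|^{α-2})` on the diagonal, because
`φ'(1) = β φ(1)` when `α > 1`. Up to factors converging to a power of `s` and of `t`, the double sum
is therefore the squared `L²` norm of the average of this kernel over the grid cells. For
`α > 3/2` the kernel is square integrable, so these averages converge in `L²`.
-/

section GaussianSpace

lemma iteratedDeriv_id_mul_zero {f : ℝ → ℝ} (n : ℕ) (hf : ContDiff ℝ (n + 1 : ℕ) f) :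
    iteratedDeriv (n + 1) (fun t => t * f t) 0 = (n + 1) * iteratedDeriv n f 0 := by
  rw [iteratedDeriv_fun_mul (by fun_prop) hf.contDiffAt, Finset.sum_eq_single 1]
  · simp
  · intro i _ h1
    simp [iteratedDeriv_fun_id, h1]
  · simp

variable {Ω : Type*} [MeasurableSpace Ω] {P : Measure Ω} {A B C D G : Ω → ℝ} {v : NNReal}

lemma integral_pow_add_two_of_map_eq_gaussianReal (h : P.map G = gaussianReal 0 v) (n : ℕ) :
    ∫ ω, G ω ^ (n + 2) ∂P = (n + 1) * v * ∫ ω, G ω ^ n ∂P := by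
  have hG : AEMeasurable G P := aemeasurable_of_map_neZero (by rw [h]; infer_instance)
  have hmoment : ∀ m, ∫ ω, G ω ^ m ∂P = iteratedDeriv m (fun t => Real.exp (v * t ^ 2 / 2)) 0 := by
    intro m
    have hmgf := iteratedDeriv_mgf_zero (X := fun x : ℝ => x) (μ := gaussianReal 0 v) (by simp) m
    simp only [mgf_fun_id_gaussianReal, zero_mul, zero_add] at hmgf
    rw [hmgf, ← h, ← integral_map (f := fun x : ℝ => x ^ m) hG (by fun_prop)]
    rfl
  have hderiv : deriv (fun t => Real.exp (v * t ^ 2 / 2)) =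
      fun t => v * (t * Real.exp (v * t ^ 2 / 2)) := by
    ext t
    refine (((((hasDerivAt_pow 2 t).const_mul (v : ℝ)).div_const 2).exp).congr_deriv ?_).deriv
    push_cast
    ring
  rw [hmoment, hmoment, iteratedDeriv_succ', hderiv, iteratedDeriv_const_mul_field,
    iteratedDeriv_id_mul_zero n (by fun_prop)]
  ring

/-- A centered Gaussian space: a vector space of real random variables all of whose members have
a centered Gaussian law. The constant `0` (variance `v = 0`) is allowed. -/
def IsCenteredGaussianSpace (P : Measure Ω) (V : Submodule ℝ (Ω → ℝ)) : Prop :=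
  ∀ G ∈ V, ∃ v : NNReal, P.map G = gaussianReal 0 v

lemma IsCenteredGaussianFamily.isCenteredGaussianSpace_span {ι : Type*} {X : ι → Ω → ℝ}
    (h : IsCenteredGaussianFamily P X) :
    IsCenteredGaussianSpace P (Submodule.span ℝ (Set.range X)) := by
  intro G hG
  obtain ⟨c, rfl⟩ := Finsupp.mem_span_range_iff_exists_finsupp.1 hG
  convert h c.support c using 5 with v ω
  simp [Finsupp.sum, Finset.sum_apply]

namespace IsCenteredGaussianSpace

variable {V : Submodule ℝ (Ω → ℝ)}

lemma memLp (hV : IsCenteredGaussianSpace P V) (hG : G ∈ V) {p : ENNReal} (hp : p ≠ ⊤) :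
    MemLp G p P := by
  obtain ⟨v, hv⟩ := hV G hG
  have : IsGaussian (P.map G) := by rw [hv]; infer_instance
  exact IsGaussian.hasGaussianLaw.memLp hp

lemma memLp_mul (hV : IsCenteredGaussianSpace P V) (hA : A ∈ V) (hB : B ∈ V) {p : ENNReal}
    (hp : p ≠ ⊤) : MemLp (fun ω => A ω * B ω) p P := by
  have : ENNReal.HolderTriple (2 * p) (2 * p) p := ⟨by
    rw [ENNReal.mul_inv (by simp) (by simp), ← two_mul, ← mul_assoc,
      ENNReal.mul_inv_cancel (by simp) (by simp), one_mul]⟩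
  have h2p : 2 * p ≠ ⊤ := ENNReal.mul_ne_top (by simp) hp
  exact (hV.memLp hB h2p).mul (hV.memLp hA h2p)

lemma integrable_mul (hV : IsCenteredGaussianSpace P V) (hA : A ∈ V) (hB : B ∈ V) :
    Integrable (fun ω => A ω * B ω) P :=
  memLp_one_iff_integrable.1 (hV.memLp_mul hA hB ENNReal.one_ne_top)

lemma integrable_mul_mul_mul (hV : IsCenteredGaussianSpace P V) (hA : A ∈ V) (hB : B ∈ V)
    (hC : C ∈ V) (hD : D ∈ V) : Integrable (fun ω => A ω * B ω * (C ω * D ω)) P :=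
  (hV.memLp_mul hA hB (p := 2) (by simp)).integrable_mul (hV.memLp_mul hC hD (p := 2) (by simp))

lemma integral_add_mul (hV : IsCenteredGaussianSpace P V) (hA : A ∈ V) (hB : B ∈ V) (hC : C ∈ V) :
    ∫ ω, (A + B) ω * C ω ∂P = (∫ ω, A ω * C ω ∂P) + ∫ ω, B ω * C ω ∂P := by
  simp only [Pi.add_apply, add_mul]
  exact integral_add (hV.integrable_mul hA hC) (hV.integrable_mul hB hC)

lemma integral_sub_mul (hV : IsCenteredGaussianSpace P V) (hA : A ∈ V) (hB : B ∈ V) (hC : C ∈ V) :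
    ∫ ω, (A - B) ω * C ω ∂P = (∫ ω, A ω * C ω ∂P) - ∫ ω, B ω * C ω ∂P := by
  simp only [Pi.sub_apply, sub_mul]
  exact integral_sub (hV.integrable_mul hA hC) (hV.integrable_mul hB hC)

lemma integral_mul_add (hV : IsCenteredGaussianSpace P V) (hA : A ∈ V) (hB : B ∈ V) (hC : C ∈ V) :
    ∫ ω, A ω * (B + C) ω ∂P = (∫ ω, A ω * B ω ∂P) + ∫ ω, A ω * C ω ∂P := by
  simp only [Pi.add_apply, mul_add]
  exact integral_add (hV.integrable_mul hA hB) (hV.integrable_mul hA hC)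

lemma integral_mul_sub (hV : IsCenteredGaussianSpace P V) (hA : A ∈ V) (hB : B ∈ V) (hC : C ∈ V) :
    ∫ ω, A ω * (B - C) ω ∂P = (∫ ω, A ω * B ω ∂P) - ∫ ω, A ω * C ω ∂P := by
  simp only [Pi.sub_apply, mul_sub]
  exact integral_sub (hV.integrable_mul hA hB) (hV.integrable_mul hA hC)

lemma integral_mul_mul_mul_polarization (hV : IsCenteredGaussianSpace P V) (hA : A ∈ V)
    (hB : B ∈ V) (hC : C ∈ V) (hD : D ∈ V) :
    ∫ ω, A ω * B ω * (C ω * D ω) ∂P = 4⁻¹ *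
      ((∫ ω, A ω * B ω * ((C + D) ω * (C + D) ω) ∂P)
        - ∫ ω, A ω * B ω * ((C - D) ω * (C - D) ω) ∂P) := by
  have hadd := V.add_mem hC hD
  have hsub := V.sub_mem hC hD
  rw [← integral_sub (hV.integrable_mul_mul_mul hA hB hadd hadd)
    (hV.integrable_mul_mul_mul hA hB hsub hsub), ← integral_const_mul]
  congr 1 with ω
  simp only [Pi.add_apply, Pi.sub_apply]
  ring

variable [IsProbabilityMeasure P]

lemma integral_pow_four (hV : IsCenteredGaussianSpace P V) (hA : A ∈ V) :
    ∫ ω, A ω * A ω * (A ω * A ω) ∂P = 3 * (∫ ω, A ω * A ω ∂P) ^ 2 := by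
  obtain ⟨v, hv⟩ := hV A hA
  have h2 : ∫ ω, A ω ^ 2 ∂P = v := by
    simpa using integral_pow_add_two_of_map_eq_gaussianReal hv 0
  have h4 : ∫ ω, A ω ^ 4 ∂P = (2 + 1) * v * ∫ ω, A ω ^ 2 ∂P :=
    integral_pow_add_two_of_map_eq_gaussianReal hv 2
  calc ∫ ω, A ω * A ω * (A ω * A ω) ∂P = ∫ ω, A ω ^ 4 ∂P := by congr 1 with ω; ring
    _ = 3 * (∫ ω, A ω ^ 2 ∂P) ^ 2 := by rw [h4, h2]; ring
    _ = 3 * (∫ ω, A ω * A ω ∂P) ^ 2 := by simp only [pow_two]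

lemma integral_sq_mul_sq (hV : IsCenteredGaussianSpace P V) (hA : A ∈ V) (hB : B ∈ V) :
    ∫ ω, A ω * A ω * (B ω * B ω) ∂P =
      (∫ ω, A ω * A ω ∂P) * (∫ ω, B ω * B ω ∂P) + 2 * (∫ ω, A ω * B ω ∂P) ^ 2 := by
  have hadd := V.add_mem hA hB
  have hsub := V.sub_mem hA hB
  have polarization : ∀ ω, A ω * A ω * (B ω * B ω) = 12⁻¹ *
      ((A + B) ω * (A + B) ω * ((A + B) ω * (A + B) ω)
        + (A - B) ω * (A - B) ω * ((A - B) ω * (A - B) ω)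
        - 2 * (A ω * A ω * (A ω * A ω)) - 2 * (B ω * B ω * (B ω * B ω))) := fun ω => by
    simp only [Pi.add_apply, Pi.sub_apply]; ring
  have hcomm : ∫ ω, B ω * A ω ∂P = ∫ ω, A ω * B ω ∂P := by simp only [mul_comm]
  have hint := fun G (hG : G ∈ V) => hV.integrable_mul_mul_mul hG hG hG hG
  have iadd := hint _ hadd
  have isub := hint _ hsub
  have iA := (hint A hA).const_mul 2
  simp_rw [polarization]
  rw [integral_const_mul, integral_sub (by fun_prop) ((hint B hB).const_mul 2),
    integral_sub (by fun_prop) iA, integral_add iadd isub, integral_const_mul,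
    integral_const_mul, hV.integral_pow_four hadd, hV.integral_pow_four hsub,
    hV.integral_pow_four hA, hV.integral_pow_four hB, hV.integral_add_mul hA hB hadd,
    hV.integral_sub_mul hA hB hsub, hV.integral_mul_add hA hA hB, hV.integral_mul_add hB hA hB,
    hV.integral_mul_sub hA hA hB, hV.integral_mul_sub hB hA hB, hcomm]
  ring

lemma integral_sq_mul_mul (hV : IsCenteredGaussianSpace P V) (hA : A ∈ V) (hC : C ∈ V)
    (hD : D ∈ V) :
    ∫ ω, A ω * A ω * (C ω * D ω) ∂P = (∫ ω, A ω * A ω ∂P) * (∫ ω, C ω * D ω ∂P)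
      + 2 * ((∫ ω, A ω * C ω ∂P) * ∫ ω, A ω * D ω ∂P) := by
  have hadd := V.add_mem hC hD
  have hsub := V.sub_mem hC hD
  have hcomm : ∫ ω, D ω * C ω ∂P = ∫ ω, C ω * D ω ∂P := by simp only [mul_comm]
  rw [hV.integral_mul_mul_mul_polarization hA hA hC hD, hV.integral_sq_mul_sq hA hadd,
    hV.integral_sq_mul_sq hA hsub, hV.integral_mul_add hA hC hD, hV.integral_mul_sub hA hC hD,
    hV.integral_add_mul hC hD hadd, hV.integral_sub_mul hC hD hsub, hV.integral_mul_add hC hC hD,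
    hV.integral_mul_add hD hC hD, hV.integral_mul_sub hC hC hD, hV.integral_mul_sub hD hC hD, hcomm]
  ring

/-- Isserlis' theorem (Wick's formula) for four factors. -/
lemma integral_mul_mul_mul (hV : IsCenteredGaussianSpace P V) (hA : A ∈ V) (hB : B ∈ V)
    (hC : C ∈ V) (hD : D ∈ V) :
    ∫ ω, A ω * B ω * (C ω * D ω) ∂P = (∫ ω, A ω * B ω ∂P) * (∫ ω, C ω * D ω ∂P)
      + (∫ ω, A ω * C ω ∂P) * (∫ ω, B ω * D ω ∂P)
      + (∫ ω, A ω * D ω ∂P) * (∫ ω, B ω * C ω ∂P) := by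
  have hadd := V.add_mem hC hD
  have hsub := V.sub_mem hC hD
  have hsq : ∀ G ∈ V, ∫ ω, A ω * B ω * (G ω * G ω) ∂P = (∫ ω, G ω * G ω ∂P) * (∫ ω, A ω * B ω ∂P)
      + 2 * ((∫ ω, G ω * A ω ∂P) * ∫ ω, G ω * B ω ∂P) := fun G hG => by
    rw [← hV.integral_sq_mul_mul hG hA hB]
    simp only [mul_comm]
  have hcomm : ∀ F G : Ω → ℝ, ∫ ω, F ω * G ω ∂P = ∫ ω, G ω * F ω ∂P := fun F G => by
    simp only [mul_comm]
  rw [hV.integral_mul_mul_mul_polarization hA hB hC hD, hsq _ hadd, hsq _ hsub,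
    hV.integral_add_mul hC hD hadd, hV.integral_sub_mul hC hD hsub, hV.integral_mul_add hC hC hD,
    hV.integral_mul_add hD hC hD, hV.integral_mul_sub hC hC hD, hV.integral_mul_sub hD hC hD,
    hV.integral_add_mul hC hD hA, hV.integral_add_mul hC hD hB, hV.integral_sub_mul hC hD hA,
    hV.integral_sub_mul hC hD hB, hcomm D C, hcomm C A, hcomm D A, hcomm C B, hcomm D B]
  ring

lemma memLp_mul_sub_const (hV : IsCenteredGaussianSpace P V) (hA : A ∈ V)
    (hB : B ∈ V) (a : ℝ) : MemLp (fun ω => A ω * B ω - a) 2 P :=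
  (hV.memLp_mul hA hB (by simp)).sub (memLp_const a)

lemma integral_centered_mul_centered (hV : IsCenteredGaussianSpace P V)
    (hA : A ∈ V) (hB : B ∈ V) (hC : C ∈ V) (hD : D ∈ V) :
    ∫ ω, (A ω * B ω - ∫ ω', A ω' * B ω' ∂P) * (C ω * D ω - ∫ ω', C ω' * D ω' ∂P) ∂P =
      (∫ ω, A ω * C ω ∂P) * (∫ ω, B ω * D ω ∂P)
        + (∫ ω, A ω * D ω ∂P) * (∫ ω, B ω * C ω ∂P) := by
  set m := ∫ ω, A ω * B ω ∂P with hm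
  set m' := ∫ ω, C ω * D ω ∂P with hm'
  have iAB := (hV.integrable_mul hA hB).mul_const m'
  have iCD := (hV.integrable_mul hC hD).const_mul m
  have iABCD := hV.integrable_mul_mul_mul hA hB hC hD
  simp only [sub_mul, mul_sub]
  rw [integral_sub (by fun_prop) (by fun_prop), integral_sub iABCD iCD,
    integral_sub iAB (by fun_prop), integral_mul_const, integral_const_mul, integral_const,
    probReal_univ, hV.integral_mul_mul_mul hA hB hC hD, ← hm, ← hm', smul_eq_mul]
  ring

end IsCenteredGaussianSpace

end GaussianSpace

lemma tendsto_integral_sq_sub_of_tendsto_integral_mul {Ω ι : Type*} [MeasurableSpace Ω]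
    {P : Measure Ω} {u : ι → Ω → ℝ} {l : Filter ι} {L : ℝ} (hu : ∀ i, MemLp (u i) 2 P)
    (h : Tendsto (fun p : ι × ι => ∫ ω, u p.1 ω * u p.2 ω ∂P) (l ×ˢ l) (nhds L)) :
    Tendsto (fun p : ι × ι => ∫ ω, (u p.1 ω - u p.2 ω) ^ 2 ∂P) (l ×ˢ l) (nhds 0) := by
  have hexpand : ∀ p : ι × ι, ∫ ω, (u p.1 ω - u p.2 ω) ^ 2 ∂P =
      (∫ ω, u p.1 ω * u p.1 ω ∂P) - 2 * (∫ ω, u p.1 ω * u p.2 ω ∂P)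
        + ∫ ω, u p.2 ω * u p.2 ω ∂P := fun p => by
    have hint : ∀ i j, Integrable (fun ω => u i ω * u j ω) P := fun i j =>
      (hu i).integrable_mul (hu j)
    rw [← integral_const_mul, ← integral_sub (hint _ _) ((hint _ _).const_mul 2),
      ← integral_add (by fun_prop) (hint _ _)]
    congr 1 with ω
    ring
  have h₁₁ := h.comp ((tendsto_fst (f := l) (g := l)).prodMk tendsto_fst)
  have h₂₂ := h.comp ((tendsto_snd (f := l) (g := l)).prodMk tendsto_snd)
  have hlim := (h₁₁.sub (h.const_mul 2)).add h₂₂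
  rw [show L - 2 * L + L = 0 by ring] at hlim
  exact hlim.congr fun p => (hexpand p).symm

/-- The increment `R(s₂,t₂) − R(s₁,t₂) − R(s₂,t₁) + R(s₁,t₁)` of `R` over a rectangle; for a
covariance function it is the covariance of the increments over `[s₁,s₂]` and `[t₁,t₂]`. -/
def rectIncr (R : ℝ → ℝ → ℝ) (s₁ s₂ t₁ t₂ : ℝ) : ℝ :=
  R s₂ t₂ - R s₁ t₂ - R s₂ t₁ + R s₁ t₁

/-- The increment of `R` over the grid cell `[k/d, (k+1)/d] × [l/e, (l+1)/e]`. -/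
def gridIncr (R : ℝ → ℝ → ℝ) (d e k l : ℕ) : ℝ :=
  rectIncr R (k / d) ((k + 1) / d) (l / e) ((l + 1) / e)

/-- The normalized double sum `d^{1-α} e^{1-α} Σ_{k ≤ dx} Σ_{l ≤ ex} ρ(k,l)²` of squared
correlations of the increments over the grids of mesh `1/d` and `1/e`. -/
def sqCorrSum (R : ℝ → ℝ → ℝ) (α x : ℝ) (d e : ℕ) : ℝ :=
  (d : ℝ) ^ (1 - α) * (e : ℝ) ^ (1 - α) *
    ∑ k ∈ Finset.Icc 1 ⌊(d : ℝ) * x⌋₊, ∑ l ∈ Finset.Icc 1 ⌊(e : ℝ) * x⌋₊,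
      gridIncr R d e k l ^ 2 / (gridIncr R d d k k * gridIncr R e e l l)

/-- The processes `X i`, `i < n`, are pairwise uncorrelated and each has covariance function `R`
on `[0, ∞)` (they are centered wherever this is used). -/
def HasDiagonalCovariance {Ω : Type*} [MeasurableSpace Ω] (P : Measure Ω) {n : ℕ}
    (X : Fin n → ℝ → Ω → ℝ) (R : ℝ → ℝ → ℝ) : Prop :=
  ∀ (i j : Fin n) (s t : ℝ), 0 ≤ s → 0 ≤ t →
    ∫ ω, X i s ω * X j t ω ∂P = if i = j then R s t else 0

section WishartEntries

variable {Ω : Type*} [MeasurableSpace Ω] {P : Measure Ω} {n : ℕ}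
  {X : Fin n → ℝ → Ω → ℝ} {V : Submodule ℝ (Ω → ℝ)} {R : ℝ → ℝ → ℝ} {d e k l : ℕ}

lemma integral_incr_mul_incr (hV : IsCenteredGaussianSpace P V) (hX : ∀ i t, X i t ∈ V)
    (hcov : HasDiagonalCovariance P X R)
    (i j : Fin n) {s₁ s₂ t₁ t₂ : ℝ} (hs₁ : 0 ≤ s₁) (hs₂ : 0 ≤ s₂) (ht₁ : 0 ≤ t₁) (ht₂ : 0 ≤ t₂) :
    ∫ ω, (X i s₂ - X i s₁) ω * (X j t₂ - X j t₁) ω ∂P =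
      if i = j then rectIncr R s₁ s₂ t₁ t₂ else 0 := by
  rw [hV.integral_sub_mul (hX _ _) (hX _ _) (V.sub_mem (hX _ _) (hX _ _)),
    hV.integral_mul_sub (hX _ _) (hX _ _) (hX _ _), hV.integral_mul_sub (hX _ _) (hX _ _) (hX _ _),
    hcov _ _ _ _ hs₂ ht₂, hcov _ _ _ _ hs₂ ht₁, hcov _ _ _ _ hs₁ ht₂, hcov _ _ _ _ hs₁ ht₁]
  split_ifs
  · simp only [rectIncr]; ring
  · ring

lemma integral_incr_sq (hV : IsCenteredGaussianSpace P V) (hX : ∀ i t, X i t ∈ V)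
    (hcov : HasDiagonalCovariance P X R) (i : Fin n) (d k : ℕ) :
    ∫ ω, (X i (((k : ℝ) + 1) / d) ω - X i ((k : ℝ) / d) ω) ^ 2 ∂P = gridIncr R d d k k := by
  have h := integral_incr_mul_incr hV hX hcov i i (s₁ := k / d) (s₂ := (k + 1) / d)
    (t₁ := k / d) (t₂ := (k + 1) / d) (by positivity) (by positivity) (by positivity)
    (by positivity)
  simpa only [if_true, ← pow_two, Pi.sub_apply, gridIncr] using h

lemma hatY_mem (P : Measure Ω) (hX : ∀ i t, X i t ∈ V) (d : ℕ) (i : Fin n) (k : ℕ) :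
    hatY P X d i k ∈ V := by
  convert V.smul_mem
    (√(∫ ω, (X i (((k : ℝ) + 1) / d) ω - X i ((k : ℝ) / d) ω) ^ 2 ∂P))⁻¹
    (V.sub_mem (hX i (((k : ℝ) + 1) / d)) (hX i ((k : ℝ) / d))) using 1
  ext ω
  simp only [hatY, Pi.smul_apply, Pi.sub_apply, smul_eq_mul, div_eq_inv_mul]

lemma integral_hatY_mul_hatY (hV : IsCenteredGaussianSpace P V) (hX : ∀ i t, X i t ∈ V)
    (hcov : HasDiagonalCovariance P X R) (i j : Fin n) (d e k l : ℕ) :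
    ∫ ω, hatY P X d i k ω * hatY P X e j l ω ∂P = if i = j then
      gridIncr R d e k l / (√(gridIncr R d d k k) * √(gridIncr R e e l l)) else 0 := by
  have h := integral_incr_mul_incr hV hX hcov i j (s₁ := k / d) (s₂ := (k + 1) / d)
    (t₁ := l / e) (t₂ := (l + 1) / e) (by positivity) (by positivity) (by positivity)
    (by positivity)
  simp only [hatY, integral_incr_sq hV hX hcov, div_mul_div_comm, integral_div]
  simp only [Pi.sub_apply] at h
  rw [h, ite_div, zero_div]
  rfl

lemma integral_hatY_mul_hatY_self (hV : IsCenteredGaussianSpace P V) (hX : ∀ i t, X i t ∈ V)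
    (hcov : HasDiagonalCovariance P X R)
    (hd : 0 < gridIncr R d d k k) (i j : Fin n) :
    ∫ ω, hatY P X d i k ω * hatY P X d j k ω ∂P = if i = j then 1 else 0 := by
  rw [integral_hatY_mul_hatY hV hX hcov, Real.mul_self_sqrt hd.le, div_self hd.ne']

variable [IsProbabilityMeasure P]

lemma memLp_hatW (hV : IsCenteredGaussianSpace P V) (hX : ∀ i t, X i t ∈ V) (α x : ℝ) (d : ℕ)
    (i j : Fin n) : MemLp (hatW P X α x d i j) 2 P :=
  (memLp_finsetSum _ fun k _ => hV.memLp_mul_sub_const (hatY_mem P hX d i k) (hatY_mem P hX d j k)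
    (if i = j then 1 else 0)).const_mul _

lemma integral_hatY_products (hV : IsCenteredGaussianSpace P V) (hX : ∀ i t, X i t ∈ V)
    (hcov : HasDiagonalCovariance P X R)
    (hd : 0 < gridIncr R d d k k) (he : 0 < gridIncr R e e l l) (i j : Fin n) :
    ∫ ω, (hatY P X d i k ω * hatY P X d j k ω - if i = j then 1 else 0) *
        (hatY P X e i l ω * hatY P X e j l ω - if i = j then 1 else 0) ∂P =
      (if i = j then 2 else 1) *
        (gridIncr R d e k l ^ 2 / (gridIncr R d d k k * gridIncr R e e l l)) := by
  have hsq : (√(gridIncr R d d k k) * √(gridIncr R e e l l)) ^ 2 =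
      gridIncr R d d k k * gridIncr R e e l l := by
    rw [mul_pow, Real.sq_sqrt hd.le, Real.sq_sqrt he.le]
  have h := hV.integral_centered_mul_centered (hatY_mem P hX d i k) (hatY_mem P hX d j k)
    (hatY_mem P hX e i l) (hatY_mem P hX e j l)
  rw [integral_hatY_mul_hatY_self hV hX hcov hd, integral_hatY_mul_hatY_self hV hX hcov he] at h
  rw [h]
  simp only [integral_hatY_mul_hatY hV hX hcov, if_true, ← hsq, ← div_pow, eq_comm (a := j)]
  split_ifs <;> ring

lemma integral_hatW_mul_hatW (hV : IsCenteredGaussianSpace P V) (hX : ∀ i t, X i t ∈ V)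
    (hcov : HasDiagonalCovariance P X R)
    (hd : ∀ k, 0 < gridIncr R d d k k) (he : ∀ l, 0 < gridIncr R e e l l) (i j : Fin n)
    (α x : ℝ) :
    ∫ ω, hatW P X α x d i j ω * hatW P X α x e i j ω ∂P =
      (if i = j then 2 else 1) * sqCorrSum R α x d e := by
  have hcentered := fun d k => hV.memLp_mul_sub_const (hatY_mem P hX d i k) (hatY_mem P hX d j k)
    (if i = j then 1 else 0)
  have hint : ∀ k l, Integrable (fun ω =>
      (hatY P X d i k ω * hatY P X d j k ω - if i = j then 1 else 0) *
        (hatY P X e i l ω * hatY P X e j l ω - if i = j then 1 else 0)) P :=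
    fun k l => (hcentered d k).integrable_mul (hcentered e l)
  simp only [hatW, mul_mul_mul_comm, Finset.sum_mul_sum, integral_const_mul]
  rw [integral_finsetSum _ fun k _ => integrable_finsetSum _ fun l _ => hint k l]
  simp only [integral_finsetSum _ fun l _ => hint _ l,
    integral_hatY_products hV hX hcov (hd _) (he _), sqCorrSum, Finset.mul_sum]
  exact Finset.sum_congr rfl fun k _ => Finset.sum_congr rfl fun l _ => by ring

theorem tendsto_integral_sq_hatW_sub (hV : IsCenteredGaussianSpace P V) (hX : ∀ i t, X i t ∈ V)
    (hcov : HasDiagonalCovariance P X R) (hpos : ∀ d k, 0 < d → 0 < gridIncr R d d k k)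
    {α x L : ℝ} (hL : Tendsto (fun p : ℕ × ℕ => sqCorrSum R α x p.1 p.2) (atTop ×ˢ atTop) (nhds L))
    (i j : Fin n) :
    Tendsto (fun p : ℕ × ℕ => ∫ ω, (hatW P X α x p.1 i j ω - hatW P X α x p.2 i j ω) ^ 2 ∂P)
      (atTop ×ˢ atTop) (nhds 0) := by
  have hprod : Tendsto
      (fun p : ℕ × ℕ => ∫ ω, hatW P X α x p.1 i j ω * hatW P X α x p.2 i j ω ∂P)
      (atTop ×ˢ atTop) (nhds ((if i = j then 2 else 1) * L)) := by
    refine (hL.const_mul (if i = j then 2 else 1 : ℝ)).congr' ?_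
    filter_upwards [(eventually_gt_atTop 0).prod_mk (eventually_gt_atTop 0)] with p hp
    exact (integral_hatW_mul_hatW hV hX hcov (hpos _ · hp.1) (hpos _ · hp.2) i j α x).symm
  exact tendsto_integral_sq_sub_of_tendsto_integral_mul
    (u := fun d => hatW P X α x d i j) (memLp_hatW hV hX α x · i j) hprod

end WishartEntries

section FiberEnergy

lemma sq_lpNorm_two {X : Type*} [MeasurableSpace X] {μ : Measure X} {f : X → ℝ}
    (hf : AEStronglyMeasurable f μ) : lpNorm f 2 μ ^ 2 = ∫ p, f p ^ 2 ∂μ := by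
  have hnonneg : 0 ≤ ∫ p, f p ^ 2 ∂μ := integral_nonneg fun p => sq_nonneg _
  rw [lpNorm_eq_integral_norm_rpow_toReal (by simp) (by simp) hf]
  simp only [ENNReal.toReal_ofNat, Real.rpow_two, Real.norm_eq_abs, sq_abs]
  rw [← one_div, ← Real.sqrt_eq_rpow, Real.sq_sqrt hnonneg]

variable {X ι : Type*} [MeasurableSpace X] {μ : Measure X}

lemma abs_lpNorm_sub_lpNorm_le {E : Type*} [NormedAddCommGroup E] {p : ENNReal} {f g : X → E}
    (hf : MemLp f p μ) (hg : MemLp g p μ) (hp : 1 ≤ p) :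
    |lpNorm f p μ - lpNorm g p μ| ≤ lpNorm (f - g) p μ :=
  abs_sub_le_iff.2 ⟨sub_le_iff_le_add'.2 (lpNorm_le_lpNorm_add_lpNorm_sub' hg hp),
    sub_le_iff_le_add'.2 (lpNorm_le_lpNorm_add_lpNorm_sub hf hp)⟩

lemma lpNorm_restrict_le {E : Type*} [NormedAddCommGroup E] {p : ENNReal} {f : X → E}
    (hf : MemLp f p μ) (A : Set X) : lpNorm f p (μ.restrict A) ≤ lpNorm f p μ := by
  rw [← toReal_eLpNorm hf.1, ← toReal_eLpNorm hf.1.restrict]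
  exact ENNReal.toReal_mono hf.eLpNorm_ne_top (eLpNorm_mono_measure f Measure.restrict_le_self)

/-- The sum over `q ∈ s` of `(∫_{π = q} f)² / μ(π = q)`: the squared `L²` norm, over `{π ∈ s}`, of
the function obtained by averaging `f` over each fiber of `π`. Null fibers contribute
`x / 0 = 0`. -/
def fiberEnergy (μ : Measure X) (π : X → ι) (s : Finset ι) (f : X → ℝ) : ℝ :=
  ∑ q ∈ s, (∫ p in π ⁻¹' {q}, f p ∂μ) ^ 2 / μ.real (π ⁻¹' {q})

variable {π : X → ι} {s : Finset ι} {f g : X → ℝ}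

lemma fiberEnergy_nonneg : 0 ≤ fiberEnergy μ π s f :=
  Finset.sum_nonneg fun _ _ => div_nonneg (sq_nonneg _) measureReal_nonneg

lemma sqrt_fiberEnergy_le_add (hf : Integrable f μ) (hg : Integrable g μ) :
    √(fiberEnergy μ π s f) ≤ √(fiberEnergy μ π s g) + √(fiberEnergy μ π s (f - g)) := by
  let v (u : X → ℝ) : EuclideanSpace ℝ s :=
    WithLp.toLp 2 fun q => (∫ p in π ⁻¹' {q.1}, u p ∂μ) / √(μ.real (π ⁻¹' {q.1}))
  have hv : ∀ u, √(fiberEnergy μ π s u) = ‖v u‖ := fun u => by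
    simp only [EuclideanSpace.norm_eq, v, fiberEnergy, Real.norm_eq_abs, sq_abs, div_pow,
      Real.sq_sqrt measureReal_nonneg]
    rw [Finset.sum_coe_sort s fun q => (∫ p in π ⁻¹' {q}, u p ∂μ) ^ 2 / μ.real (π ⁻¹' {q})]
  have hsub : v (f - g) = v f - v g := by
    ext q
    simp only [v, PiLp.sub_apply, Pi.sub_apply, ← sub_div]
    rw [integral_sub hf.integrableOn hg.integrableOn]
  rw [hv, hv, hv, hsub]
  exact norm_le_insert' _ _

lemma sq_setIntegral_div_measureReal_le [IsFiniteMeasure μ] (hf : MemLp f 2 μ) (A : Set X) :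
    (∫ p in A, f p ∂μ) ^ 2 / μ.real A ≤ ∫ p in A, f p ^ 2 ∂μ := by
  have hsq : IntegrableOn (fun p => f p ^ 2) A μ := hf.integrable_sq.integrableOn
  rcases eq_or_ne (μ A) 0 with hA | hA
  · simp [measureReal_def, hA]
  have hpos : 0 < μ.real A := ENNReal.toReal_pos hA (measure_ne_top μ A)
  have jensen : (⨍ p in A, f p ∂μ) ^ 2 ≤ ⨍ p in A, f p ^ 2 ∂μ :=
    even_two.convexOn_pow.map_set_average_le (by fun_prop) isClosed_univ hA (measure_ne_top μ A)
      (by simp) (hf.integrable one_le_two).integrableOn hsq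
  simp only [setAverage_eq, smul_eq_mul] at jensen
  calc (∫ p in A, f p ∂μ) ^ 2 / μ.real A
      = μ.real A * ((μ.real A)⁻¹ * ∫ p in A, f p ∂μ) ^ 2 := by field_simp
    _ ≤ μ.real A * ((μ.real A)⁻¹ * ∫ p in A, f p ^ 2 ∂μ) := by gcongr
    _ = ∫ p in A, f p ^ 2 ∂μ := by field_simp

lemma sqrt_fiberEnergy_le_lpNorm [IsFiniteMeasure μ] [MeasurableSpace ι]
    [MeasurableSingletonClass ι] (hπ : Measurable π) (hf : MemLp f 2 μ) :
    √(fiberEnergy μ π s f) ≤ lpNorm f 2 μ := by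
  refine Real.sqrt_le_iff.2 ⟨lpNorm_nonneg, ?_⟩
  calc fiberEnergy μ π s f ≤ ∑ q ∈ s, ∫ p in π ⁻¹' {q}, f p ^ 2 ∂μ :=
        Finset.sum_le_sum fun q _ => sq_setIntegral_div_measureReal_le hf _
    _ = ∫ p in ⋃ q ∈ s, π ⁻¹' {q}, f p ^ 2 ∂μ :=
        (integral_biUnion_finset s (fun q _ => hπ (measurableSet_singleton q))
          (fun q _ r _ hqr => Disjoint.preimage π (Set.disjoint_singleton.2 hqr))
          fun q _ => hf.integrable_sq.integrableOn).symm
    _ ≤ ∫ p, f p ^ 2 ∂μ :=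
        setIntegral_le_integral hf.integrable_sq (ae_of_all _ fun p => sq_nonneg _)
    _ = lpNorm f 2 μ ^ 2 := (sq_lpNorm_two hf.1).symm

lemma abs_sqrt_fiberEnergy_sub_le [IsFiniteMeasure μ] [MeasurableSpace ι]
    [MeasurableSingletonClass ι] (hπ : Measurable π) (hf : MemLp f 2 μ) (hg : MemLp g 2 μ) :
    |√(fiberEnergy μ π s f) - √(fiberEnergy μ π s g)| ≤ lpNorm (f - g) 2 μ := by
  have hf₁ := hf.integrable one_le_two
  have hg₁ := hg.integrable one_le_two
  refine abs_sub_le_iff.2 ⟨?_, ?_⟩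
  · linarith [sqrt_fiberEnergy_le_add (π := π) (s := s) hf₁ hg₁,
      sqrt_fiberEnergy_le_lpNorm (s := s) hπ (hf.sub hg)]
  · rw [lpNorm_sub_comm]
    linarith [sqrt_fiberEnergy_le_add (π := π) (s := s) hg₁ hf₁,
      sqrt_fiberEnergy_le_lpNorm (s := s) hπ (hg.sub hf)]

lemma fiberEnergy_eq_integral_mul_average [IsFiniteMeasure μ] [MeasurableSpace ι]
    [DiscreteMeasurableSpace ι] (hπ : Measurable π) (hf : Integrable f μ) :
    fiberEnergy μ π s f =
      ∫ p, (π ⁻¹' s).indicator (fun p => f p * ⨍ r in π ⁻¹' {π p}, f r ∂μ) p ∂μ := by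
  have hfiber : ∀ q, MeasurableSet (π ⁻¹' {q}) := fun q => hπ (measurableSet_singleton q)
  have hconst : ∀ q, Set.EqOn (fun p => f p * ⨍ r in π ⁻¹' {π p}, f r ∂μ)
      (fun p => f p * ⨍ r in π ⁻¹' {q}, f r ∂μ) (π ⁻¹' {q}) := fun q p hp => by
    simp only [Set.mem_preimage, Set.mem_singleton_iff] at hp
    simp only [hp]
  have hunion : π ⁻¹' s = ⋃ q ∈ s, π ⁻¹' {q} := by ext p; simp
  rw [integral_indicator (hπ (.of_discrete)), hunion, integral_biUnion_finset s
    (fun q _ => hfiber q) (fun q _ r _ hqr => Disjoint.preimage π (Set.disjoint_singleton.2 hqr))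
    fun q _ => (integrableOn_congr_fun (hconst q) (hfiber q)).2 (hf.integrableOn.mul_const _)]
  refine Finset.sum_congr rfl fun q _ => ?_
  rw [setIntegral_congr_fun (hfiber q) (hconst q), integral_mul_const, setAverage_eq, smul_eq_mul]
  ring

variable {K : Type*} {l : Filter K}

section DominatedConvergence

variable [l.NeBot] [l.IsCountablyGenerated] {F : K → X → ℝ} {B : X → ℝ}

lemma memLp_of_tendsto_of_dominated {p : ENNReal} (hF : ∀ κ, AEStronglyMeasurable (F κ) μ)
    (hB : MemLp B p μ) (hFB : ∀ᶠ κ in l, ∀ᵐ x ∂μ, |F κ x| ≤ B x)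
    (hlim : ∀ᵐ x ∂μ, Tendsto (F · x) l (nhds (f x))) : MemLp f p μ := by
  obtain ⟨κ, hκ⟩ := l.exists_seq_tendsto
  have hbound : ∀ᵐ x ∂μ, ∀ᶠ n in atTop, |F (κ n) x| ≤ B x := by
    obtain ⟨N, hN⟩ := eventually_atTop.1 (hκ.eventually hFB)
    filter_upwards [ae_all_iff.2 fun n => hN (N + n) le_self_add] with x hx
    exact eventually_atTop.2 ⟨N, fun n hn => Nat.add_sub_cancel' hn ▸ hx (n - N)⟩
  refine hB.mono' (aestronglyMeasurable_of_tendsto_ae l hF hlim) ?_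
  filter_upwards [hbound, hlim] with x hx hlimx
  exact le_of_tendsto (hlimx.comp hκ).abs hx

lemma tendsto_lpNorm_two_sub_of_dominated (hF : ∀ κ, AEStronglyMeasurable (F κ) μ)
    (hB : MemLp B 2 μ) (hFB : ∀ᶠ κ in l, ∀ᵐ x ∂μ, |F κ x| ≤ B x)
    (hlim : ∀ᵐ x ∂μ, Tendsto (F · x) l (nhds (f x))) :
    Tendsto (fun κ => lpNorm (F κ - f) 2 μ) l (nhds 0) := by
  have hf : MemLp f 2 μ := memLp_of_tendsto_of_dominated hF hB hFB hlim
  have hsq : Tendsto (fun κ => ∫ x, (F κ - f) x ^ 2 ∂μ) l (nhds (∫ _, 0 ∂μ)) := by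
    refine tendsto_integral_filter_of_dominated_convergence (fun x => 2 * (B x ^ 2 + f x ^ 2))
      (.of_forall fun κ => ((hF κ).sub hf.1).pow 2) ?_
      ((hB.integrable_sq.add hf.integrable_sq).const_mul 2)
      (hlim.mono fun x hx => by simpa using (hx.sub_const (f x)).pow 2)
    filter_upwards [hFB] with κ hκ
    filter_upwards [hκ] with x hx
    rw [Real.norm_of_nonneg (sq_nonneg _), Pi.sub_apply]
    nlinarith [sq_nonneg (F κ x + f x), sq_le_sq.2 (hx.trans (le_abs_self (B x)))]
  rw [integral_zero] at hsq
  have hsqrt := hsq.sqrt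
  simp only [← fun κ => sq_lpNorm_two ((hF κ).sub hf.1), Real.sqrt_sq lpNorm_nonneg,
    Real.sqrt_zero] at hsqrt
  exact hsqrt

end DominatedConvergence

lemma ae_measure_fiber_ne_zero [Countable ι] (μ : Measure X) (π : X → ι) :
    ∀ᵐ p ∂μ, μ (π ⁻¹' {π p}) ≠ 0 := by
  have hnull : ∀ q, ∀ᵐ p ∂μ, π p = q → μ (π ⁻¹' {q}) ≠ 0 := fun q => by
    rcases eq_or_ne (μ (π ⁻¹' {q})) 0 with hq | hq
    · exact (measure_eq_zero_iff_ae_notMem.1 hq).mono fun p hp hpq => absurd hpq hp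
    · exact ae_of_all _ fun p _ => hq
  exact (ae_all_iff.2 hnull).mono fun p hp => hp _ rfl

lemma tendsto_setAverage_of_continuousAt [IsFiniteMeasure μ] [TopologicalSpace X] {A : K → Set X}
    {p : X} (hf : Integrable f μ) (hfp : ContinuousAt f p)
    (hA : Tendsto A l (nhds p).smallSets) (hA₀ : ∀ᶠ κ in l, μ (A κ) ≠ 0)
    (hAm : ∀ κ, MeasurableSet (A κ)) :
    Tendsto (fun κ => ⨍ r in A κ, f r ∂μ) l (nhds (f p)) := by
  refine Metric.nhds_basis_closedBall.tendsto_right_iff.2 fun ε hε => ?_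
  have hsmall := tendsto_smallSets_iff.1 hA _ (hfp (Metric.closedBall_mem_nhds (f p) hε))
  filter_upwards [hsmall, hA₀] with κ hκ hκ₀
  exact (convex_closedBall (f p) ε).set_average_mem Metric.isClosed_closedBall hκ₀
    (measure_ne_top μ _) ((ae_restrict_mem (hAm κ)).mono fun r hr => hκ hr) hf.integrableOn

/-- The partitions of `X` into the fibers of `π κ` get arbitrarily fine along `l`, and the unions
of the fibers over `s κ` exhaust the set `D`, in both cases almost everywhere. -/
structure IsFinePartition [MeasurableSpace ι] [TopologicalSpace X] (μ : Measure X) (l : Filter K)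
    (π : K → X → ι) (s : K → Finset ι) (D : Set X) : Prop where
  measurable : ∀ κ, Measurable (π κ)
  eventually_mem_iff : ∀ᵐ p ∂μ, ∀ᶠ κ in l, π κ p ∈ s κ ↔ p ∈ D
  tendsto_smallSets : ∀ᵐ p ∂μ, p ∈ D → Tendsto (fun κ => π κ ⁻¹' {π κ p}) l (nhds p).smallSets

namespace IsFinePartition

variable [Countable K] [l.IsCountablyGenerated] [Countable ι] [MeasurableSpace ι]
  [DiscreteMeasurableSpace ι] [IsFiniteMeasure μ] [TopologicalSpace X] {π : K → X → ι}
  {s : K → Finset ι} {D : Set X}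

lemma tendsto_fiberEnergy_of_continuous [OpensMeasurableSpace X]
    (h : IsFinePartition μ l π s D) (hD : MeasurableSet D) (hf : Continuous f) {C : ℝ}
    (hC : ∀ p, ‖f p‖ ≤ C) :
    Tendsto (fun κ => fiberEnergy μ (π κ) (s κ) f) l (nhds (∫ p in D, f p ^ 2 ∂μ)) := by
  have hfi : Integrable f μ := .of_bound hf.aestronglyMeasurable C (ae_of_all _ hC)
  have hfiber : ∀ κ q, MeasurableSet (π κ ⁻¹' {q}) := fun κ q =>
    h.measurable κ (measurableSet_singleton q)
  have hpos : ∀ᵐ p ∂μ, ∀ κ, μ (π κ ⁻¹' {π κ p}) ≠ 0 :=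
    ae_all_iff.2 fun κ => ae_measure_fiber_ne_zero μ (π κ)
  simp only [fun κ => fiberEnergy_eq_integral_mul_average (s := s κ) (h.measurable κ) hfi]
  rw [← integral_indicator hD]
  refine tendsto_integral_filter_of_dominated_convergence (fun _ => C * C) ?_ ?_
    (integrable_const _) ?_
  · have haverage : ∀ κ, Measurable fun p => ⨍ r in π κ ⁻¹' {π κ p}, f r ∂μ := fun κ =>
      (Measurable.of_discrete (f := fun q => ⨍ r in π κ ⁻¹' {q}, f r ∂μ)).comp (h.measurable κ)
    exact .of_forall fun κ => ((hf.measurable.mul (haverage κ)).indicator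
      (h.measurable κ .of_discrete)).aestronglyMeasurable
  · refine .of_forall fun κ => hpos.mono fun p hp => (norm_indicator_le_norm_self _ p).trans ?_
    have haverage : (⨍ r in π κ ⁻¹' {π κ p}, f r ∂μ) ∈ Metric.closedBall (0 : ℝ) C :=
      (convex_closedBall 0 C).set_average_mem Metric.isClosed_closedBall (hp κ)
        (measure_ne_top μ _) (ae_of_all _ fun r => by simpa using hC r) hfi.integrableOn
    rw [norm_mul]
    exact mul_le_mul (hC p) (by simpa using haverage) (norm_nonneg _)
      ((norm_nonneg _).trans (hC p))
  · filter_upwards [hpos, h.eventually_mem_iff, h.tendsto_smallSets] with p hp hmem hsmall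
    classical
    simp only [Set.indicator_apply, Set.mem_preimage, Finset.mem_coe]
    split_ifs with hpD
    · rw [pow_two]
      exact ((tendsto_setAverage_of_continuousAt hfi hf.continuousAt (hsmall hpD) (.of_forall hp)
        fun κ => hfiber κ _).const_mul (f p)).congr'
          (hmem.mono fun κ hκ => (if_pos (hκ.2 hpD)).symm)
    · exact tendsto_const_nhds.congr' (hmem.mono fun κ hκ => (if_neg (mt hκ.1 hpD)).symm)

lemma tendsto_fiberEnergy [BorelSpace X] [NormalSpace X] [μ.WeaklyRegular]
    (h : IsFinePartition μ l π s D) (hD : MeasurableSet D) {F : K → X → ℝ}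
    (hf : MemLp f 2 μ) (hF : ∀ᶠ κ in l, MemLp (F κ) 2 μ)
    (hFf : Tendsto (fun κ => lpNorm (F κ - f) 2 μ) l (nhds 0)) :
    Tendsto (fun κ => fiberEnergy μ (π κ) (s κ) (F κ)) l (nhds (∫ p in D, f p ^ 2 ∂μ)) := by
  have hnorm : ∀ g : X → ℝ, MemLp g 2 μ →
      √(∫ p in D, g p ^ 2 ∂μ) = lpNorm g 2 (μ.restrict D) := fun g hg => by
    rw [← sq_lpNorm_two hg.1.restrict, Real.sqrt_sq lpNorm_nonneg]
  suffices hsqrt : Tendsto (fun κ => √(fiberEnergy μ (π κ) (s κ) (F κ))) l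
      (nhds √(∫ p in D, f p ^ 2 ∂μ)) by
    simpa only [Real.sq_sqrt fiberEnergy_nonneg,
      Real.sq_sqrt (integral_nonneg fun p => sq_nonneg (f p))] using hsqrt.pow 2
  refine Metric.tendsto_nhds.2 fun ε hε => ?_
  obtain ⟨g, hfg, hg⟩ := hf.exists_boundedContinuous_eLpNorm_sub_le (by simp)
    (ENNReal.ofReal_pos.2 (show 0 < ε / 4 by positivity)).ne'
  have hfg' : lpNorm (f - ⇑g) 2 μ ≤ ε / 4 := by
    rw [← toReal_eLpNorm (hf.sub hg).1]
    exact ENNReal.toReal_le_of_le_ofReal (by positivity) hfg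
  have hgf_D : |√(∫ p in D, g p ^ 2 ∂μ) - √(∫ p in D, f p ^ 2 ∂μ)| ≤ ε / 4 := by
    rw [hnorm _ hg, hnorm _ hf, abs_sub_comm]
    exact (abs_lpNorm_sub_lpNorm_le (hf.restrict D) (hg.restrict D) one_le_two).trans
      ((lpNorm_restrict_le (hf.sub hg) D).trans hfg')
  have hg_lim := (h.tendsto_fiberEnergy_of_continuous hD g.continuous g.norm_coe_le_norm).sqrt
  filter_upwards [hF, hFf.eventually (gt_mem_nhds (show 0 < ε / 4 by positivity)),
    Metric.tendsto_nhds.1 hg_lim (ε / 4) (by positivity)] with κ hFκ hFfκ hgκ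
  have hFg := abs_sqrt_fiberEnergy_sub_le (s := s κ) (h.measurable κ) hFκ hg
  have htriangle := lpNorm_sub_le_lpNorm_sub_add_lpNorm_sub (h := ⇑g) hFκ hf one_le_two
  rw [Real.dist_eq] at hgκ ⊢
  rw [abs_le, abs_lt] at *
  constructor <;> linarith

lemma tendsto_fiberEnergy_of_dominated [BorelSpace X] [NormalSpace X] [μ.WeaklyRegular] [l.NeBot]
    (h : IsFinePartition μ l π s D) (hD : MeasurableSet D) {F : K → X → ℝ} {B : X → ℝ}
    (hF : ∀ κ, AEStronglyMeasurable (F κ) μ) (hB : MemLp B 2 μ)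
    (hFB : ∀ᶠ κ in l, ∀ᵐ x ∂μ, |F κ x| ≤ B x)
    (hlim : ∀ᵐ x ∂μ, Tendsto (F · x) l (nhds (f x))) :
    Tendsto (fun κ => fiberEnergy μ (π κ) (s κ) (F κ)) l (nhds (∫ p in D, f p ^ 2 ∂μ)) :=
  h.tendsto_fiberEnergy hD (memLp_of_tendsto_of_dominated hF hB hFB hlim)
    (hFB.mono fun κ hκ => hB.mono' (hF κ) hκ) (tendsto_lpNorm_two_sub_of_dominated hF hB hFB hlim)

end IsFinePartition

end FiberEnergy

section Grid

lemma preimage_floor_mul_singleton {d k : ℕ} (hd : 0 < d) (hk : k ≠ 0) :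
    (fun t : ℝ => ⌊d * t⌋₊) ⁻¹' {k} = Set.Ico ((k : ℝ) / d) ((k + 1) / d) := by
  have hd' : (0 : ℝ) < d := Nat.cast_pos.2 hd
  ext t
  simp only [Set.mem_preimage, Set.mem_singleton_iff, Nat.floor_eq_iff' hk, Set.mem_Ico,
    div_le_iff₀' hd', lt_div_iff₀' hd']

lemma eventually_one_le_floor_mul {t : ℝ} (ht : 0 < t) :
    ∀ᶠ d : ℕ in atTop, 1 ≤ ⌊d * t⌋₊ := by
  filter_upwards [(tendsto_natCast_atTop_atTop.atTop_mul_const ht).eventually_ge_atTop 1] with d hd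
  exact Nat.le_floor (by simpa using hd)

lemma eventually_floor_mul_mem_Icc_iff {t : ℝ} (ht : 0 < t) (x : ℝ) :
    ∀ᶠ d : ℕ in atTop, ⌊d * t⌋₊ ∈ Finset.Icc 1 ⌊d * x⌋₊ ↔ t ≤ x := by
  rcases le_or_gt t x with htx | hxt
  · filter_upwards [eventually_one_le_floor_mul ht] with d hd
    simpa [htx, hd] using Nat.floor_mono (mul_le_mul_of_nonneg_left htx d.cast_nonneg)
  · filter_upwards [(tendsto_natCast_atTop_atTop.atTop_mul_const
      (sub_pos.2 hxt)).eventually_ge_atTop 1, eventually_one_le_floor_mul ht] with d hd hd₁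
    have hlt : ⌊d * x⌋₊ < ⌊d * t⌋₊ := by
      rcases lt_or_ge (d * x) 0 with hneg | hnonneg
      · rwa [Nat.floor_of_nonpos hneg.le]
      · refine (Nat.lt_add_one _).trans_le (Nat.le_floor ?_)
        push_cast
        linarith [Nat.floor_le hnonneg]
    exact iff_of_false (fun h => (Finset.mem_Icc.1 h).2.not_gt hlt) hxt.not_ge

lemma tendsto_preimage_floor_mul_smallSets {t : ℝ} (ht : 0 < t) :
    Tendsto (fun d : ℕ => (fun r : ℝ => ⌊d * r⌋₊) ⁻¹' {⌊d * t⌋₊}) atTop (nhds t).smallSets := by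
  refine tendsto_smallSets_iff.2 fun U hU => ?_
  obtain ⟨ε, hε, hεU⟩ := Metric.mem_nhds_iff.1 hU
  filter_upwards [eventually_one_le_floor_mul ht, eventually_gt_atTop 0,
    (tendsto_natCast_atTop_atTop.atTop_mul_const hε).eventually_gt_atTop 1] with d hdt hd hdε
  have hd' : (0 : ℝ) < d := Nat.cast_pos.2 hd
  have hk : ⌊d * t⌋₊ ≠ 0 := Nat.one_le_iff_ne_zero.1 hdt
  intro r hr
  have ht_mem : t ∈ (fun r : ℝ => ⌊d * r⌋₊) ⁻¹' {⌊d * t⌋₊} := rfl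
  rw [preimage_floor_mul_singleton hd hk] at hr ht_mem
  refine hεU (lt_of_le_of_lt (Real.dist_le_of_mem_Icc (Set.Ico_subset_Icc_self hr)
    (Set.Ico_subset_Icc_self ht_mem)) ?_)
  rw [← sub_div, add_sub_cancel_left, div_lt_iff₀' hd']
  exact hdε

/-- The index `(k, l)` of the cell `[k/d, (k+1)/d) × [l/e, (l+1)/e)` containing a point of
`[0, ∞)²`, for `κ = (d, e)`. Points with a nonpositive coordinate get index `0` there. -/
def gridIndex (κ : ℕ × ℕ) (p : ℝ × ℝ) : ℕ × ℕ :=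
  (⌊κ.1 * p.1⌋₊, ⌊κ.2 * p.2⌋₊)

/-- The indices of the grid cells entering `sqCorrSum _ _ x κ.1 κ.2`. -/
def gridRange (x : ℝ) (κ : ℕ × ℕ) : Finset (ℕ × ℕ) :=
  Finset.Icc 1 ⌊κ.1 * x⌋₊ ×ˢ Finset.Icc 1 ⌊κ.2 * x⌋₊

lemma measurable_gridIndex (κ : ℕ × ℕ) : Measurable (gridIndex κ) := by
  unfold gridIndex
  fun_prop

lemma preimage_gridIndex_singleton (κ q : ℕ × ℕ) : gridIndex κ ⁻¹' {q} =
    ((fun t : ℝ => ⌊κ.1 * t⌋₊) ⁻¹' {q.1}) ×ˢ ((fun t : ℝ => ⌊κ.2 * t⌋₊) ⁻¹' {q.2}) := by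
  ext p
  simp [gridIndex, Prod.ext_iff]

lemma isFinePartition_grid {μ : Measure (ℝ × ℝ)} (hμ : ∀ᵐ p ∂μ, 0 < p.1 ∧ 0 < p.2) (x : ℝ) :
    IsFinePartition μ (atTop ×ˢ atTop) gridIndex (gridRange x)
      (Set.Ioc 0 x ×ˢ Set.Ioc 0 x) where
  measurable := measurable_gridIndex
  eventually_mem_iff := hμ.mono fun p hp => by
    filter_upwards [(eventually_floor_mul_mem_Icc_iff hp.1 x).prod_mk
      (eventually_floor_mul_mem_Icc_iff hp.2 x)] with κ hκ
    simp only [gridRange, gridIndex, Finset.mem_product, hκ.1, hκ.2, Set.mem_prod, Set.mem_Ioc,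
      hp.1, hp.2, true_and]
  tendsto_smallSets := hμ.mono fun p hp _ => by
    refine tendsto_smallSets_iff.2 fun U hU => ?_
    obtain ⟨U₁, hU₁, U₂, hU₂, hU⟩ := mem_nhds_prod_iff.1 hU
    filter_upwards [(tendsto_smallSets_iff.1 (tendsto_preimage_floor_mul_smallSets hp.1) U₁
      hU₁).prod_mk (tendsto_smallSets_iff.1 (tendsto_preimage_floor_mul_smallSets hp.2) U₂ hU₂)]
      with κ hκ
    rw [preimage_gridIndex_singleton]
    exact (Set.prod_mono hκ.1 hκ.2).trans hU

lemma Ico_grid_subset {d k : ℕ} {x : ℝ} (hd : 0 < d) (hk : k ∈ Finset.Icc 1 ⌊d * x⌋₊) :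
    Set.Ico ((k : ℝ) / d) ((k + 1) / d) ⊆ Set.Ioc 0 (x + 1) := by
  obtain ⟨hk₁, hkx⟩ := Finset.mem_Icc.1 hk
  have hd' : (1 : ℝ) ≤ d := Nat.one_le_cast.2 hd
  have hkx' : (k : ℝ) ≤ d * x := (Nat.le_floor_iff' (by lia)).1 hkx
  refine fun t ht => ⟨lt_of_lt_of_le (by positivity) ht.1, ht.2.le.trans ?_⟩
  rw [div_le_iff₀' (by positivity)]
  linarith

lemma measureReal_grid_cell (d e k l : ℕ) : volume.real
    (Set.Ico ((k : ℝ) / d) ((k + 1) / d) ×ˢ Set.Ico ((l : ℝ) / e) ((l + 1) / e)) =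
      (d : ℝ)⁻¹ * (e : ℝ)⁻¹ := by
  have hside : ∀ d k : ℕ, volume.real (Set.Ico ((k : ℝ) / d) ((k + 1) / d)) = (d : ℝ)⁻¹ := by
    intro d k
    rw [Real.volume_real_Ico_of_le (by gcongr; simp), ← sub_div, add_sub_cancel_left, one_div]
  rw [Measure.volume_eq_prod, measureReal_prod_prod, hside, hside]

lemma fiberEnergy_gridIndex {d e : ℕ} (hd : 0 < d) (he : 0 < e) (x : ℝ) (f : ℝ × ℝ → ℝ) :
    fiberEnergy (volume.restrict (Set.Ioc 0 (x + 1) ×ˢ Set.Ioc 0 (x + 1))) (gridIndex (d, e))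
      (gridRange x (d, e)) f =
    ∑ k ∈ Finset.Icc 1 ⌊d * x⌋₊, ∑ l ∈ Finset.Icc 1 ⌊e * x⌋₊, d * e *
      (∫ p in Set.Ico ((k : ℝ) / d) ((k + 1) / d) ×ˢ Set.Ico ((l : ℝ) / e) ((l + 1) / e), f p) ^ 2
        := by
  rw [fiberEnergy, gridRange, Finset.sum_product]
  refine Finset.sum_congr rfl fun k hk => Finset.sum_congr rfl fun l hl => ?_
  have hcell : MeasurableSet
      (Set.Ico ((k : ℝ) / d) ((k + 1) / d) ×ˢ Set.Ico ((l : ℝ) / e) ((l + 1) / e)) :=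
    measurableSet_Ico.prod measurableSet_Ico
  rw [preimage_gridIndex_singleton,
    preimage_floor_mul_singleton hd (Nat.one_le_iff_ne_zero.1 (Finset.mem_Icc.1 hk).1),
    preimage_floor_mul_singleton he (Nat.one_le_iff_ne_zero.1 (Finset.mem_Icc.1 hl).1),
    Measure.restrict_restrict hcell, measureReal_restrict_apply hcell,
    Set.inter_eq_left.2 (Set.prod_mono (Ico_grid_subset hd hk) (Ico_grid_subset he hl)),
    measureReal_grid_cell]
  field_simp

end Grid

section SingularKernels

lemma locallyIntegrable_comp_sub {f : ℝ → ℝ} (hf : LocallyIntegrable f) :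
    LocallyIntegrable fun p : ℝ × ℝ => f (p.1 - p.2) := by
  refine locallyIntegrable_iff.2 fun K hK => ?_
  set A := (fun p : ℝ × ℝ => p.1 - p.2) '' K
  set B := Prod.snd '' K
  have hA : IsCompact A := hK.image (by fun_prop)
  have hB : IsCompact B := hK.image continuous_snd
  have hprod : Integrable fun p : ℝ × ℝ => A.indicator f p.1 * B.indicator (fun _ => (1 : ℝ)) p.2 :=
    ((hf.integrableOn_isCompact hA).integrable_indicator hA.measurableSet).mul_prod
      ((integrableOn_const hB.measure_lt_top.ne).integrable_indicator hB.measurableSet)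
  refine (((measurePreserving_sub_prod volume volume).integrable_comp_of_integrable
    hprod).integrableOn (s := K)).congr_fun (fun p hp => ?_) hK.measurableSet
  simp only [Function.comp_apply, Set.indicator_of_mem (Set.mem_image_of_mem Prod.snd hp),
    Set.indicator_of_mem (Set.mem_image_of_mem (fun p : ℝ × ℝ => p.1 - p.2) hp), A, B, mul_one]

lemma locallyIntegrable_abs_rpow {r : ℝ} (hr : -1 < r) :
    LocallyIntegrable fun u : ℝ => |u| ^ r :=
  locallyIntegrable_of_norm_le_rpow (C := 1) (α := -r) (by simp) (by simpa using by linarith)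
    (ae_of_all _ fun u => by simp [abs_of_nonneg (Real.rpow_nonneg (abs_nonneg u) r)])
    (Measurable.pow_const (by fun_prop) r).aestronglyMeasurable

lemma ae_fst_ne_snd : ∀ᵐ p : ℝ × ℝ, p.1 ≠ p.2 := by
  have hdiag : MeasurableSet {p : ℝ × ℝ | p.1 ≠ p.2} :=
    (measurableSet_eq_fun measurable_fst measurable_snd).compl
  rw [Measure.volume_eq_prod, Measure.ae_prod_iff_ae_ae hdiag]
  exact ae_of_all _ fun s => (Measure.ae_ne volume s).mono fun t ht => ht.symm

lemma memLp_two_abs_sub_rpow {r : ℝ} (hr : -1 < 2 * r) {A : Set (ℝ × ℝ)}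
    (hA : Bornology.IsBounded A) :
    MemLp (fun p : ℝ × ℝ => |p.1 - p.2| ^ r) 2 (volume.restrict A) := by
  have hmeas : Measurable fun p : ℝ × ℝ => |p.1 - p.2| ^ r := Measurable.pow_const (by fun_prop) r
  refine (memLp_two_iff_integrable_sq hmeas.aestronglyMeasurable).2 ?_
  simp only [← Real.rpow_mul_natCast (abs_nonneg _), mul_comm r, Nat.cast_ofNat]
  exact ((locallyIntegrable_comp_sub (locallyIntegrable_abs_rpow hr)).integrableOn_isCompact
    hA.isCompact_closure).mono_set subset_closure

end SingularKernels

lemma setIntegral_Ico_prod_Ico {f : ℝ × ℝ → ℝ} {a b c d : ℝ} (hab : a ≤ b) (hcd : c ≤ d)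
    (hf : IntegrableOn f (Set.Ico a b ×ˢ Set.Ico c d)) :
    ∫ p in Set.Ico a b ×ˢ Set.Ico c d, f p = ∫ t in c..d, ∫ s in a..b, f (s, t) := by
  rw [IntegrableOn, Measure.volume_eq_prod, ← Measure.prod_restrict] at hf
  rw [Measure.volume_eq_prod, ← Measure.prod_restrict, integral_prod_symm f hf,
    intervalIntegral.integral_of_le hcd, integral_Ico_eq_integral_Ioc]
  simp only [intervalIntegral.integral_of_le hab, integral_Ico_eq_integral_Ioc]

-- The first derivative is differentiated only off the diagonal, where `covR` is smooth.
theorem rectIncr_eq_setIntegral_of_hasDerivAt {R D K : ℝ → ℝ → ℝ} {s₁ s₂ t₁ t₂ : ℝ}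
    (hs : s₁ ≤ s₂) (ht : t₁ ≤ t₂)
    (hR : ∀ s ∈ Set.Icc s₁ s₂, ∀ t ∈ Set.Icc t₁ t₂, HasDerivAt (R s) (D s t) t)
    (hDt : ∀ s ∈ Set.Icc s₁ s₂, ContinuousOn (D s) (Set.Icc t₁ t₂))
    (hDs : ∀ t ∈ Set.Icc t₁ t₂, ContinuousOn (fun s => D s t) (Set.Icc s₁ s₂))
    (hD : ∀ t ∈ Set.Icc t₁ t₂, ∀ s ∈ Set.Icc s₁ s₂, s ≠ t →
      HasDerivAt (fun s => D s t) (K s t) s)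
    (hint : IntegrableOn (fun p : ℝ × ℝ => K p.1 p.2) (Set.Ico s₁ s₂ ×ˢ Set.Ico t₁ t₂)) :
    rectIncr R s₁ s₂ t₁ t₂ = ∫ p in Set.Ico s₁ s₂ ×ˢ Set.Ico t₁ t₂, K p.1 p.2 := by
  have hK : ∀ᵐ t ∂volume.restrict (Set.Ico t₁ t₂), IntervalIntegrable (K · t) volume s₁ s₂ := by
    rw [IntegrableOn, Measure.volume_eq_prod, ← Measure.prod_restrict] at hint
    filter_upwards [hint.prod_left_ae] with t hKt
    rwa [intervalIntegrable_iff_integrableOn_Ico_of_le hs]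
  have hinner : ∀ᵐ t ∂volume.restrict (Set.Ico t₁ t₂),
      ∫ s in s₁..s₂, K s t = D s₂ t - D s₁ t := by
    filter_upwards [hK, ae_restrict_mem measurableSet_Ico] with t hKt ht
    have ht := Set.Ico_subset_Icc_self ht
    exact integral_eq_of_hasDerivAt_off_countable_of_le (fun s => D s t) _ hs
      (Set.countable_singleton t) (hDs t ht)
      (fun s hs => hD t ht s (Set.Ioo_subset_Icc_self hs.1) hs.2) hKt
  have houter : ∀ s ∈ Set.Icc s₁ s₂, IntervalIntegrable (D s) volume t₁ t₂ ∧
      ∫ t in t₁..t₂, D s t = R s t₂ - R s t₁ := fun s hs => by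
    have hDs := (hDt s hs).intervalIntegrable_of_Icc (μ := volume) ht
    refine ⟨hDs, intervalIntegral.integral_eq_sub_of_hasDerivAt (fun t ht' => ?_) hDs⟩
    exact hR s hs t (Set.uIcc_of_le ht ▸ ht')
  obtain ⟨hint₁, hR₁⟩ := houter s₁ (Set.left_mem_Icc.2 hs)
  obtain ⟨hint₂, hR₂⟩ := houter s₂ (Set.right_mem_Icc.2 hs)
  rw [setIntegral_Ico_prod_Ico hs ht hint, intervalIntegral.integral_of_le ht,
    ← integral_Ico_eq_integral_Ioc, integral_congr_ae hinner, integral_Ico_eq_integral_Ioc,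
    ← intervalIntegral.integral_of_le ht, intervalIntegral.integral_sub hint₂ hint₁, hR₁, hR₂,
    rectIncr]
  ring

section CovarianceKernel

variable {β α C : ℝ} {φ φ' φ'' : ℝ → ℝ} {s t y : ℝ}

lemma covR_comm (β : ℝ) (φ : ℝ → ℝ) (s t : ℝ) : covR β φ s t = covR β φ t s := by
  simp only [covR, or_comm, min_comm, max_comm]

lemma covR_of_le (hs : 0 < s) (hst : s ≤ t) : covR β φ s t = s ^ (2 * β) * φ (t / s) := by
  simp [covR, hs.ne', (hs.trans_le hst).ne', min_eq_left hst, max_eq_right hst]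

lemma covR_mul_mul {c : ℝ} (hc : 0 < c) (hs : 0 ≤ s) (ht : 0 ≤ t) :
    covR β φ (c * s) (c * t) = c ^ (2 * β) * covR β φ s t := by
  rcases hs.eq_or_lt with rfl | hs
  · simp [covR]
  rcases ht.eq_or_lt with rfl | ht
  · simp [covR]
  have := lt_min hs ht
  simp only [covR, mul_eq_zero, hc.ne', hs.ne', ht.ne', or_self, if_false,
    ← mul_min_of_nonneg _ _ hc.le, ← mul_max_of_nonneg _ _ hc.le, Real.mul_rpow hc.le this.le,
    mul_div_mul_left _ _ hc.ne', mul_assoc]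

lemma covR_eq_rpow_mul (hs : 0 < s) (ht : 0 ≤ t) :
    covR β φ s t = s ^ (2 * β) * covR β φ 1 (t / s) := by
  rw [← covR_mul_mul hs zero_le_one (by positivity), mul_one, mul_div_cancel₀ _ hs.ne']

/-- `φ` is `C¹` on `[1, ∞)` and twice differentiable on `(1, ∞)`, with derivatives `φ'` and `φ''`;
the boundary condition at `1` makes `covR β φ` continuously differentiable across the diagonal. -/
structure IsRegularProfile (β : ℝ) (φ φ' φ'' : ℝ → ℝ) : Prop where
  hasDerivWithinAt : ∀ y, 1 ≤ y → HasDerivWithinAt φ (φ' y) (Set.Ici 1) y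
  continuousOn : ContinuousOn φ' (Set.Ici 1)
  hasDerivAt_deriv : ∀ y, 1 < y → HasDerivAt φ' (φ'' y) y
  apply_one : φ' 1 = β * φ 1

/-- The profile `g` for which `covR (β - 1) g` is the mixed derivative `∂²/∂s∂t` of `covR β φ` off
the diagonal. -/
def mixedProfile (β : ℝ) (φ' φ'' : ℝ → ℝ) (y : ℝ) : ℝ :=
  (2 * β - 1) * φ' y - y * φ'' y

/-- The derivative of `y ↦ covR β φ 1 y` on `(0, ∞)`. -/
def derivCovR (β : ℝ) (φ φ' : ℝ → ℝ) (y : ℝ) : ℝ :=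
  if 1 ≤ y then φ' y else y ^ (2 * β - 1) * (2 * β * φ y⁻¹ - y⁻¹ * φ' y⁻¹)

lemma covR_one_of_one_le (hy : 1 ≤ y) : covR β φ 1 y = φ y := by
  simp [covR_of_le one_pos hy]

lemma covR_one_of_le_one (hy₀ : 0 < y) (hy : y ≤ 1) : covR β φ 1 y = y ^ (2 * β) * φ y⁻¹ := by
  rw [covR_comm, covR_of_le hy₀ hy, one_div]

namespace IsRegularProfile

variable (h : IsRegularProfile β φ φ' φ'')
include h

lemma hasDerivAt (hy : 1 < y) : HasDerivAt φ (φ' y) y :=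
  (h.hasDerivWithinAt y hy.le).hasDerivAt (Ici_mem_nhds hy)

lemma hasDerivWithinAt_rpow_mul_inv (hy₀ : 0 < y) (hy : y ≤ 1) :
    HasDerivWithinAt (fun y => y ^ (2 * β) * φ y⁻¹)
      (y ^ (2 * β - 1) * (2 * β * φ y⁻¹ - y⁻¹ * φ' y⁻¹)) (Set.Ioc 0 1) y := by
  have hmaps : Set.MapsTo (fun y : ℝ => y⁻¹) (Set.Ioc 0 1) (Set.Ici 1) := fun z hz =>
    (one_le_inv₀ hz.1).2 hz.2
  have hφ := (h.hasDerivWithinAt y⁻¹ (hmaps ⟨hy₀, hy⟩)).comp y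
    (hasDerivAt_inv hy₀.ne').hasDerivWithinAt hmaps
  refine ((Real.hasDerivAt_rpow_const (p := 2 * β) (.inl hy₀.ne')).hasDerivWithinAt.mul
    hφ).congr_deriv ?_
  simp only [Function.comp_apply, Real.rpow_sub_one hy₀.ne']
  field_simp
  ring

lemma hasDerivAt_covR_one (hy : 0 < y) : HasDerivAt (covR β φ 1) (derivCovR β φ φ' y) y := by
  have hright : 1 ≤ y → HasDerivWithinAt (covR β φ 1) (φ' y) (Set.Ici 1) y := fun hy₁ =>
    (h.hasDerivWithinAt y hy₁).congr (fun z hz => covR_one_of_one_le hz) (covR_one_of_one_le hy₁)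
  have hleft : y ≤ 1 → HasDerivWithinAt (covR β φ 1)
      (y ^ (2 * β - 1) * (2 * β * φ y⁻¹ - y⁻¹ * φ' y⁻¹)) (Set.Ioc 0 1) y := fun hy₁ =>
    (h.hasDerivWithinAt_rpow_mul_inv hy hy₁).congr (fun z hz => covR_one_of_le_one hz.1 hz.2)
      (covR_one_of_le_one hy hy₁)
  rcases lt_trichotomy y 1 with hy₁ | rfl | hy₁
  · rw [derivCovR, if_neg hy₁.not_ge]
    exact (hleft hy₁.le).hasDerivAt (Ioc_mem_nhds hy hy₁)
  · have hleft₁ := hleft le_rfl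
    rw [derivCovR, if_pos le_rfl]
    rw [Real.one_rpow, inv_one, h.apply_one,
      show 1 * (2 * β * φ 1 - 1 * (β * φ 1)) = β * φ 1 by ring, ← h.apply_one] at hleft₁
    exact (hleft₁.union (hright le_rfl)).hasDerivAt
      (by rw [Set.Ioc_union_Ici_eq_Ioi one_pos]; exact Ioi_mem_nhds one_pos)
  · rw [derivCovR, if_pos hy₁.le]
    exact (hright hy₁.le).hasDerivAt (Ici_mem_nhds hy₁)

lemma continuousOn_derivCovR : ContinuousOn (derivCovR β φ φ') (Set.Ioi 0) := by
  have hinv : ContinuousOn (fun y : ℝ => y⁻¹) (Set.Ioc 0 1) :=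
    continuousOn_inv₀.mono fun y hy => hy.1.ne'
  have hmaps : Set.MapsTo (fun y : ℝ => y⁻¹) (Set.Ioc 0 1) (Set.Ici 1) := fun z hz =>
    Set.mem_Ici.2 ((one_le_inv₀ hz.1).2 hz.2)
  have hφ : ContinuousOn φ (Set.Ici 1) := fun y hy => (h.hasDerivWithinAt y hy).continuousWithinAt
  have hpow : ContinuousOn (fun y : ℝ => y ^ (2 * β - 1)) (Set.Ioc 0 1) := fun y hy =>
    (Real.continuousAt_rpow_const y _ (.inl hy.1.ne')).continuousWithinAt
  have hformula : ContinuousOn (fun y => y ^ (2 * β - 1) * (2 * β * φ y⁻¹ - y⁻¹ * φ' y⁻¹))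
      (Set.Ioc 0 1) :=
    hpow.mul ((continuousOn_const.mul (hφ.comp hinv hmaps)).sub
      (hinv.mul (h.continuousOn.comp hinv hmaps)))
  have hleft : ContinuousOn (derivCovR β φ φ') (Set.Ioc 0 1) := by
    refine hformula.congr fun y hy => ?_
    rcases hy.2.eq_or_lt with rfl | hy₁
    · simp only [derivCovR, le_refl, if_true, inv_one, Real.one_rpow, h.apply_one]
      ring
    · exact if_neg hy₁.not_ge
  have hright : ContinuousOn (derivCovR β φ φ') (Set.Ici 1) :=
    h.continuousOn.congr fun y hy => if_pos hy
  intro y hy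
  rcases lt_trichotomy y 1 with hy₁ | rfl | hy₁
  · exact (hleft.continuousAt (Ioc_mem_nhds hy hy₁)).continuousWithinAt
  · rw [← Set.Ioc_union_Ici_eq_Ioi one_pos]
    exact (hleft 1 ⟨one_pos, le_rfl⟩).union (hright 1 Set.self_mem_Ici)
  · exact (hright.continuousAt (Ici_mem_nhds hy₁)).continuousWithinAt

lemma hasDerivAt_derivCovR (hy : 0 < y) (hy₁ : y ≠ 1) :
    HasDerivAt (derivCovR β φ φ')
      (y⁻¹ * ((2 * β - 1) * derivCovR β φ φ' y - covR (β - 1) (mixedProfile β φ' φ'') 1 y)) y := by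
  rcases hy₁.lt_or_gt with hy₁ | hy₁
  · have hu : 1 < y⁻¹ := (one_lt_inv₀ hy).2 hy₁
    have hφ := (h.hasDerivAt hu).const_mul (2 * β)
    have hφ' := (hasDerivAt_id' y⁻¹).mul (h.hasDerivAt_deriv _ hu)
    have hcomp := (hφ.sub hφ').comp y (hasDerivAt_inv hy.ne')
    have heq : derivCovR β φ φ' =ᶠ[nhds y]
        fun z => z ^ (2 * β - 1) * (2 * β * φ z⁻¹ - z⁻¹ * φ' z⁻¹) := by
      filter_upwards [Iio_mem_nhds hy₁] with z hz using if_neg (not_le.2 hz)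
    refine (((Real.hasDerivAt_rpow_const (p := 2 * β - 1) (.inl hy.ne')).mul
      hcomp).congr_of_eventuallyEq heq).congr_deriv ?_
    rw [derivCovR, if_neg hy₁.not_ge, covR_one_of_le_one hy hy₁.le, mixedProfile,
      show 2 * (β - 1) = 2 * β - 1 - 1 by ring, Real.rpow_sub_one hy.ne' (2 * β - 1)]
    simp only [Function.comp_apply, Pi.sub_apply, Pi.mul_apply]
    field_simp
    ring
  · have heq : derivCovR β φ φ' =ᶠ[nhds y] φ' := by
      filter_upwards [Ici_mem_nhds hy₁] with z hz using if_pos hz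
    refine ((h.hasDerivAt_deriv y hy₁).congr_of_eventuallyEq heq).congr_deriv ?_
    rw [derivCovR, if_pos hy₁.le, covR_one_of_one_le hy₁.le, mixedProfile]
    field_simp
    ring

lemma hasDerivAt_covR_right (hs : 0 < s) (ht : 0 < t) :
    HasDerivAt (covR β φ s) (s ^ (2 * β - 1) * derivCovR β φ φ' (t / s)) t := by
  have hcomp := ((h.hasDerivAt_covR_one (div_pos ht hs)).comp t
    ((hasDerivAt_id' t).div_const s)).const_mul (s ^ (2 * β))
  have heq : covR β φ s =ᶠ[nhds t] fun t => s ^ (2 * β) * covR β φ 1 (t / s) := by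
    filter_upwards [Ioi_mem_nhds ht] with u hu using covR_eq_rpow_mul hs (Set.mem_Ioi.1 hu).le
  refine (hcomp.congr_of_eventuallyEq heq).congr_deriv ?_
  rw [Real.rpow_sub_one hs.ne']
  field_simp

lemma continuousOn_rpow_mul_derivCovR_div_right (hs : 0 < s) :
    ContinuousOn (fun t => s ^ (2 * β - 1) * derivCovR β φ φ' (t / s)) (Set.Ioi 0) :=
  continuousOn_const.mul (h.continuousOn_derivCovR.comp (by fun_prop) fun _ ht => div_pos ht hs)

lemma continuousOn_rpow_mul_derivCovR_div_left (ht : 0 < t) :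
    ContinuousOn (fun s => s ^ (2 * β - 1) * derivCovR β φ φ' (t / s)) (Set.Ioi 0) := by
  refine ContinuousOn.mul (fun s hs => ?_) (h.continuousOn_derivCovR.comp
    (continuousOn_const.div continuousOn_id fun s hs => ?_) fun s hs => div_pos ht hs)
  · exact (Real.continuousAt_rpow_const s _ (.inl (ne_of_gt hs))).continuousWithinAt
  · exact ne_of_gt hs

lemma hasDerivAt_rpow_mul_derivCovR_div (hs : 0 < s) (ht : 0 < t) (hst : s ≠ t) :
    HasDerivAt (fun s => s ^ (2 * β - 1) * derivCovR β φ φ' (t / s))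
      (covR (β - 1) (mixedProfile β φ' φ'') s t) s := by
  have hne : t / s ≠ 1 := fun h => hst ((div_eq_one_iff_eq hs.ne').1 h).symm
  refine ((Real.hasDerivAt_rpow_const (p := 2 * β - 1) (.inl hs.ne')).mul
    ((h.hasDerivAt_derivCovR (div_pos ht hs) hne).comp s
      ((hasDerivAt_const s t).div (hasDerivAt_id' s) hs.ne'))).congr_deriv ?_
  rw [covR_eq_rpow_mul hs ht.le, show 2 * (β - 1) = 2 * β - 1 - 1 by ring,
    Real.rpow_sub_one hs.ne' (2 * β - 1)]
  simp only [Function.comp_apply]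
  field_simp
  ring

theorem rectIncr_covR {s₁ s₂ t₁ t₂ : ℝ} (hs₁ : 0 < s₁) (hs : s₁ ≤ s₂) (ht₁ : 0 < t₁)
    (ht : t₁ ≤ t₂)
    (hint : IntegrableOn (fun p : ℝ × ℝ => covR (β - 1) (mixedProfile β φ' φ'') p.1 p.2)
      (Set.Ico s₁ s₂ ×ˢ Set.Ico t₁ t₂)) :
    rectIncr (covR β φ) s₁ s₂ t₁ t₂ =
      ∫ p in Set.Ico s₁ s₂ ×ˢ Set.Ico t₁ t₂, covR (β - 1) (mixedProfile β φ' φ'') p.1 p.2 := by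
  have hpos : ∀ {a b u : ℝ}, 0 < a → u ∈ Set.Icc a b → 0 < u := fun ha hu => ha.trans_le hu.1
  exact rectIncr_eq_setIntegral_of_hasDerivAt hs ht
    (fun s hs t ht => h.hasDerivAt_covR_right (hpos hs₁ hs) (hpos ht₁ ht))
    (fun s hs => (h.continuousOn_rpow_mul_derivCovR_div_right (hpos hs₁ hs)).mono fun _ => hpos ht₁)
    (fun t ht => (h.continuousOn_rpow_mul_derivCovR_div_left (hpos ht₁ ht)).mono fun _ => hpos hs₁)
    (fun t ht s hs hst => h.hasDerivAt_rpow_mul_derivCovR_div (hpos hs₁ hs) (hpos ht₁ ht) hst)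
    hint

end IsRegularProfile

lemma measurable_covR (hφ : Measurable φ) : Measurable fun p : ℝ × ℝ => covR β φ p.1 p.2 := by
  unfold covR
  refine Measurable.ite ?_ measurable_const ?_
  · exact (measurable_fst (measurableSet_singleton 0)).union
      (measurable_snd (measurableSet_singleton 0))
  · fun_prop

lemma nonneg_of_abs_le_mul_sub_rpow {r : ℝ} (hφ : ∀ y, 1 < y → |φ y| ≤ C * (y - 1) ^ r) :
    0 ≤ C := by
  have h := (abs_nonneg _).trans (hφ 2 one_lt_two)
  rwa [show (2 : ℝ) - 1 = 1 by norm_num, Real.one_rpow, mul_one] at h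

lemma abs_covR_le {r : ℝ} (hφ : ∀ y, 1 < y → |φ y| ≤ C * (y - 1) ^ r) (hs : 0 < s) (ht : 0 < t)
    (hst : s ≠ t) : |covR β φ s t| ≤ C * min s t ^ (2 * β - r) * |s - t| ^ r := by
  wlog hlt : s < t generalizing s t
  · rw [covR_comm, min_comm, abs_sub_comm]
    exact this ht hs hst.symm (hst.lt_or_gt.resolve_left hlt)
  have hφ := hφ (t / s) ((one_lt_div hs).2 hlt)
  rw [covR_of_le hs hlt.le, min_eq_left hlt.le, abs_sub_comm, abs_of_pos (sub_pos.2 hlt), abs_mul,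
    abs_of_pos (Real.rpow_pos_of_pos hs _)]
  calc s ^ (2 * β) * |φ (t / s)| ≤ s ^ (2 * β) * (C * (t / s - 1) ^ r) := by gcongr
    _ = C * s ^ (2 * β - r) * (t - s) ^ r := by
      rw [div_sub_one hs.ne', Real.div_rpow (sub_pos.2 hlt).le hs.le, Real.rpow_sub hs]
      ring

lemma memLp_two_covR {r b : ℝ} (hr : -1 < 2 * r) (hrβ : r ≤ 2 * β) (hmeas : Measurable φ)
    (hφ : ∀ y, 1 < y → |φ y| ≤ C * (y - 1) ^ r) :
    MemLp (fun p : ℝ × ℝ => covR β φ p.1 p.2) 2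
      (volume.restrict (Set.Ioc 0 b ×ˢ Set.Ioc 0 b)) := by
  have hC : 0 ≤ C := nonneg_of_abs_le_mul_sub_rpow hφ
  have hbdd : Bornology.IsBounded (Set.Ioc 0 b ×ˢ Set.Ioc 0 b) :=
    (Metric.isBounded_Ioc 0 b).prod (Metric.isBounded_Ioc 0 b)
  refine ((memLp_two_abs_sub_rpow hr hbdd).const_mul (C * b ^ (2 * β - r))).mono'
    (measurable_covR hmeas).aestronglyMeasurable ?_
  filter_upwards [ae_restrict_of_ae ae_fst_ne_snd, ae_restrict_mem
    (measurableSet_Ioc.prod measurableSet_Ioc)] with p hp hmem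
  refine (abs_covR_le hφ hmem.1.1 hmem.2.1 hp).trans ?_
  have hmin := (lt_min hmem.1.1 hmem.2.1).le
  gcongr
  exact (min_le_left _ _).trans hmem.1.2

end CovarianceKernel

section ProfileOfHyp

lemma tendsto_div_sq_of_hasDerivAt {q q' : ℝ → ℝ} {a c : ℝ}
    (hq : ∀ᶠ y in nhdsWithin a (Set.Ioi a), HasDerivAt q (q' y) y)
    (hq₀ : Tendsto q (nhdsWithin a (Set.Ioi a)) (nhds 0)) (hq'₀ : q' a = 0)
    (hq' : HasDerivAt q' c a) :
    Tendsto (fun y => q y / (y - a) ^ 2) (nhdsWithin a (Set.Ioi a)) (nhds (c / 2)) := by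
  have hpos : ∀ᶠ y in nhdsWithin a (Set.Ioi a), a < y := eventually_mem_nhdsWithin
  have hslope : Tendsto (fun y => q' y / (2 * (y - a))) (nhdsWithin a (Set.Ioi a))
      (nhds (c / 2)) := by
    refine ((hasDerivAt_iff_tendsto_slope.1 hq').mono_left
      (nhdsWithin_mono a fun y hy => ne_of_gt hy)).div_const 2 |>.congr fun y => ?_
    rw [slope_def_field, hq'₀, sub_zero, div_div, mul_comm]
  refine HasDerivAt.lhopital_zero_nhdsGT hq (.of_forall fun y => ?_) ?_ hq₀ ?_ hslope
  · simpa using ((hasDerivAt_id' y).sub_const a).fun_pow 2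
  · filter_upwards [hpos] with y hy using by simp [sub_ne_zero.2 hy.ne']
  · exact Tendsto.mono_left (Continuous.tendsto' (by fun_prop) a 0 (by simp)) nhdsWithin_le_nhds

variable {β lam α ν : ℝ} {φ ψ : ℝ → ℝ} {y : ℝ}

namespace SelfSimilarHyp

/-- The derivative `φ'` on `[1, ∞)`, computed from the decomposition of `φ` in (H.1). -/
def firstDeriv (lam α : ℝ) (ψ : ℝ → ℝ) (y : ℝ) : ℝ :=
  -(lam * α * (y - 1) ^ (α - 1)) + deriv ψ y

/-- The second derivative `φ''` on `(1, ∞)`, computed from the decomposition of `φ` in (H.1). -/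
def secondDeriv (lam α : ℝ) (ψ : ℝ → ℝ) (y : ℝ) : ℝ :=
  -(lam * α * (α - 1) * (y - 1) ^ (α - 2)) + deriv (deriv ψ) y

lemma differentiableAt (h : SelfSimilarHyp β lam α ν φ ψ) (hy : 1 ≤ y) :
    DifferentiableAt ℝ ψ y ∧ DifferentiableAt ℝ (deriv ψ) y := by
  obtain ⟨-, -, -, -, -, ⟨S, -, hS, hψ⟩, -⟩ := h
  exact hψ y (hS hy)

lemma eqOn (h : SelfSimilarHyp β lam α ν φ ψ) :
    Set.EqOn φ (fun y => -lam * (y - 1) ^ α + ψ y) (Set.Ici 1) := by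
  obtain ⟨-, -, -, -, hφ, -⟩ := h
  exact hφ

lemma apply_one (h : SelfSimilarHyp β lam α ν φ ψ) : φ 1 = ψ 1 := by
  simp [h.eqOn Set.self_mem_Ici, Real.zero_rpow h.2.2.1.1.ne']

lemma hasDerivWithinAt (h : SelfSimilarHyp β lam α ν φ ψ) (hα : 1 ≤ α) (hy : 1 ≤ y) :
    HasDerivWithinAt φ (firstDeriv lam α ψ y) (Set.Ici 1) y := by
  have hpow := ((hasDerivAt_id' y).sub_const 1).rpow_const (p := α) (.inr hα)
  refine (((hpow.const_mul (-lam)).add (h.differentiableAt hy).1.hasDerivAt).congr_deriv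
    ?_).hasDerivWithinAt.congr h.eqOn (h.eqOn hy)
  rw [firstDeriv]
  ring

lemma hasDerivAt_firstDeriv (h : SelfSimilarHyp β lam α ν φ ψ) (hy : 1 < y) :
    HasDerivAt (firstDeriv lam α ψ) (secondDeriv lam α ψ y) y := by
  have hpow := ((hasDerivAt_id' y).sub_const 1).rpow_const (p := α - 1)
    (.inl (sub_ne_zero.2 hy.ne'))
  refine ((hpow.const_mul (lam * α)).neg.add
    (h.differentiableAt hy.le).2.hasDerivAt).congr_deriv ?_
  rw [secondDeriv, show α - 1 - 1 = α - 2 by ring]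
  ring

lemma isRegularProfile (h : SelfSimilarHyp β lam α ν φ ψ) (hα : 1 < α) :
    IsRegularProfile β φ (firstDeriv lam α ψ) (secondDeriv lam α ψ) where
  hasDerivWithinAt _ hy := h.hasDerivWithinAt hα.le hy
  continuousOn := fun y hy => by
    have hpow : ContinuousAt (fun y : ℝ => (y - 1) ^ (α - 1)) y :=
      ContinuousAt.rpow_const (by fun_prop) (.inr (sub_pos.2 hα).le)
    exact ((continuousAt_const.mul hpow).neg.add
      (h.differentiableAt hy).2.continuousAt).continuousWithinAt
  hasDerivAt_deriv _ hy := h.hasDerivAt_firstDeriv hy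
  apply_one := by
    obtain ⟨-, -, -, -, -, -, -, hψ, -⟩ := id h
    simp [firstDeriv, Real.zero_rpow (sub_pos.2 hα).ne', h.apply_one, hψ hα.le]

lemma measurable_mixedProfile (β lam α : ℝ) (ψ : ℝ → ℝ) :
    Measurable (mixedProfile β (firstDeriv lam α ψ) (secondDeriv lam α ψ)) := by
  have := measurable_deriv ψ
  have := measurable_deriv (deriv ψ)
  unfold mixedProfile firstDeriv secondDeriv
  fun_prop

lemma deriv_eq (h : SelfSimilarHyp β lam α ν φ ψ) (hα : 1 ≤ α) (hy : 1 < y) :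
    deriv φ y = firstDeriv lam α ψ y :=
  ((h.hasDerivWithinAt hα hy.le).hasDerivAt (Ici_mem_nhds hy)).deriv

lemma deriv_deriv_eq (h : SelfSimilarHyp β lam α ν φ ψ) (hα : 1 ≤ α) (hy : 1 < y) :
    deriv (deriv φ) y = secondDeriv lam α ψ y := by
  have heq : deriv φ =ᶠ[nhds y] firstDeriv lam α ψ := by
    filter_upwards [Ioi_mem_nhds hy] with z hz using h.deriv_eq hα hz
  rw [heq.deriv_eq, (h.hasDerivAt_firstDeriv hy).deriv]

lemma exists_bound_of_le_two (h : SelfSimilarHyp β lam α ν φ ψ) (hα : 1 ≤ α) (hα₂ : α ≤ 2) :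
    ∃ A, ∀ y, 1 < y → y ≤ 2 → |firstDeriv lam α ψ y| ≤ A * (y - 1) ^ (α - 2) ∧
      y * |secondDeriv lam α ψ y| ≤ A * (y - 1) ^ (α - 2) := by
  obtain ⟨-, hlam, -, -, -, -, ⟨C₀, hC₀, hψ', hψ''⟩, -⟩ := h
  have hα₁ : 0 ≤ α - 1 := sub_nonneg.2 hα
  refine ⟨2 * (lam * α + C₀), fun y hy hy₂ => ?_⟩
  have hu : 0 < y - 1 := sub_pos.2 hy
  have hr : 1 ≤ (y - 1) ^ (α - 2) :=
    Real.one_le_rpow_of_pos_of_le_one_of_nonpos hu (by linarith) (by linarith)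
  have hpow : (y - 1) ^ (α - 1) ≤ 1 := Real.rpow_le_one hu.le (by linarith) hα₁
  constructor
  · have hy_pow : y ^ (α - 1) ≤ 2 := by
      simpa using (Real.rpow_le_rpow_of_exponent_le hy.le (by linarith : α - 1 ≤ 1)).trans
        (by simpa using hy₂)
    calc |firstDeriv lam α ψ y| ≤ |-(lam * α * (y - 1) ^ (α - 1))| + |deriv ψ y| := abs_add_le _ _
      _ ≤ lam * α * 1 + C₀ * 2 := by
        rw [abs_neg, abs_of_nonneg (by positivity)]
        gcongr
        exact (hψ' y hy).trans (by gcongr)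
      _ ≤ 2 * (lam * α + C₀) * 1 := by nlinarith
      _ ≤ _ := by gcongr
  · calc y * |secondDeriv lam α ψ y|
        ≤ y * (|-(lam * α * (α - 1) * (y - 1) ^ (α - 2))| + |deriv (deriv ψ) y|) := by
          gcongr
          exact abs_add_le _ _
      _ ≤ y * (lam * α * (α - 1) * (y - 1) ^ (α - 2) + C₀ * y⁻¹ * 1) := by
        rw [abs_neg, abs_of_nonneg (by positivity)]
        gcongr
        exact (hψ'' y hy).trans (by gcongr)
      _ = y * (lam * α * (α - 1) * (y - 1) ^ (α - 2)) + C₀ * 1 := by field_simp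
      _ ≤ 2 * (lam * α * 1 * (y - 1) ^ (α - 2)) + 2 * C₀ * (y - 1) ^ (α - 2) := by
        gcongr
        · linarith
        · linarith
      _ = _ := by ring

lemma exists_bound_of_two_le (h : SelfSimilarHyp β lam α ν φ ψ) (hα : 1 ≤ α) :
    ∃ A, ∀ y, 2 ≤ y → |firstDeriv lam α ψ y| ≤ A * (y - 1) ^ (α - 2) ∧
      y * |secondDeriv lam α ψ y| ≤ A * (y - 1) ^ (α - 2) := by
  obtain ⟨C₁, hC₁, hφ⟩ := h.2.2.2.2.2.2.2.2
  refine ⟨2 * C₁, fun y hy => ?_⟩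
  have hy₁ : 1 < y := one_lt_two.trans_le hy
  obtain ⟨hφ', hφ''⟩ := (hφ y hy).2 hα
  rw [h.deriv_eq hα hy₁] at hφ'
  rw [h.deriv_deriv_eq hα hy₁] at hφ''
  have hu : 0 < y - 1 := sub_pos.2 hy₁
  constructor
  · exact hφ'.trans (by gcongr; linarith)
  · calc y * |secondDeriv lam α ψ y| ≤ (2 * (y - 1)) * (C₁ * (y - 1) ^ (α - 3)) := by
          gcongr; linarith
      _ = 2 * C₁ * (y - 1) ^ (α - 2) := by
        rw [show α - 3 = α - 2 - 1 by ring, Real.rpow_sub_one hu.ne']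
        field_simp

lemma exists_abs_mixedProfile_le (h : SelfSimilarHyp β lam α ν φ ψ) (hα : 1 ≤ α) (hα₂ : α ≤ 2) :
    ∃ C, ∀ y, 1 < y →
      |mixedProfile β (firstDeriv lam α ψ) (secondDeriv lam α ψ) y| ≤ C * (y - 1) ^ (α - 2) := by
  obtain ⟨A, hA⟩ := h.exists_bound_of_le_two hα hα₂
  obtain ⟨A', hA'⟩ := h.exists_bound_of_two_le hα
  refine ⟨(|2 * β - 1| + 1) * max A A', fun y hy => ?_⟩
  obtain ⟨h₁, h₂⟩ : |firstDeriv lam α ψ y| ≤ max A A' * (y - 1) ^ (α - 2) ∧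
      y * |secondDeriv lam α ψ y| ≤ max A A' * (y - 1) ^ (α - 2) := by
    rcases le_total y 2 with hy₂ | hy₂
    · exact (hA y hy hy₂).imp (le_trans · (by gcongr; exact le_max_left _ _))
        (le_trans · (by gcongr; exact le_max_left _ _))
    · exact (hA' y hy₂).imp (le_trans · (by gcongr; exact le_max_right _ _))
        (le_trans · (by gcongr; exact le_max_right _ _))
  calc _ ≤ |2 * β - 1| * |firstDeriv lam α ψ y| + y * |secondDeriv lam α ψ y| := by
        refine (abs_sub _ _).trans_eq ?_
        rw [abs_mul, abs_mul, abs_of_pos (one_pos.trans hy)]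
    _ ≤ |2 * β - 1| * (max A A' * (y - 1) ^ (α - 2)) + max A A' * (y - 1) ^ (α - 2) := by gcongr
    _ = _ := by ring

-- The boundary condition `ψ'(1) = β ψ(1)` cancels the first order term at `y = 1`.
lemma exists_tendsto_smooth_diagonal (h : SelfSimilarHyp β lam α ν φ ψ) (hα : 1 ≤ α) :
    ∃ c, Tendsto (fun y => (ψ 1 * (y ^ (2 * β) + 1) - 2 * ψ y) / (y - 1) ^ 2)
      (nhdsWithin 1 (Set.Ioi 1)) (nhds c) := by
  set q : ℝ → ℝ := fun y => ψ 1 * (y ^ (2 * β) + 1) - 2 * ψ y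
  set q' : ℝ → ℝ := fun y => ψ 1 * (2 * β * y ^ (2 * β - 1)) - 2 * deriv ψ y
  have hq : ∀ y, 1 ≤ y → HasDerivAt q (q' y) y := fun y hy =>
    (((Real.hasDerivAt_rpow_const (.inl (one_pos.trans_le hy).ne')).add_const 1).const_mul
      (ψ 1)).sub ((h.differentiableAt hy).1.hasDerivAt.const_mul 2)
  have hq' : DifferentiableAt ℝ q' 1 :=
    (((Real.differentiableAt_rpow_const_of_ne _ one_ne_zero).const_mul (2 * β)).const_mul
      (ψ 1)).sub ((h.differentiableAt le_rfl).2.const_mul 2)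
  have hq₁ : q 1 = 0 := by simp only [q, Real.one_rpow]; ring
  have hq'₁ : q' 1 = 0 := by
    obtain ⟨-, -, -, -, -, -, -, hψ, -⟩ := id h
    simp only [q', Real.one_rpow, hψ hα]
    ring
  exact ⟨_, tendsto_div_sq_of_hasDerivAt
    (eventually_mem_nhdsWithin.mono fun y hy => hq y (Set.mem_Ioi.1 hy).le)
    (hq₁ ▸ (hq 1 le_rfl).continuousAt.tendsto.mono_left nhdsWithin_le_nhds) hq'₁ hq'.hasDerivAt⟩

lemma tendsto_diagonal (h : SelfSimilarHyp β lam α ν φ ψ) (hα : 1 ≤ α) (hα₂ : α < 2) :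
    Tendsto (fun y => (φ 1 * (y ^ (2 * β) + 1) - 2 * φ y) / (y - 1) ^ α)
      (nhdsWithin 1 (Set.Ioi 1)) (nhds (2 * lam)) := by
  obtain ⟨c, hc⟩ := h.exists_tendsto_smooth_diagonal hα
  have hpow : Tendsto (fun y : ℝ => (y - 1) ^ (2 - α)) (nhdsWithin 1 (Set.Ioi 1)) (nhds 0) := by
    have hcont : ContinuousAt (fun y : ℝ => (y - 1) ^ (2 - α)) 1 :=
      ContinuousAt.rpow_const (by fun_prop) (.inr (sub_pos.2 hα₂).le)
    simpa [Real.zero_rpow (sub_pos.2 hα₂).ne'] using hcont.tendsto.mono_left nhdsWithin_le_nhds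
  have hlim := (hc.mul hpow).const_add (2 * lam)
  rw [mul_zero, add_zero] at hlim
  refine hlim.congr' ?_
  filter_upwards [eventually_mem_nhdsWithin] with y hy
  have hu : 0 < y - 1 := sub_pos.2 hy
  have hne := (Real.rpow_pos_of_pos hu α).ne'
  rw [h.apply_one, h.eqOn (Set.mem_Ioi.1 hy).le, Real.rpow_sub hu, Real.rpow_two]
  field_simp
  ring

end SelfSimilarHyp

end ProfileOfHyp

lemma tendsto_succ_div_self : Tendsto (fun k : ℕ => ((k : ℝ) + 1) / k) atTop (nhds 1) := by
  simpa [add_comm] using tendsto_add_mul_div_add_mul_atTop_nhds (1 : ℝ) 0 1 one_ne_zero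

section GridWeights

variable {V : ℕ → ℝ} {γ c s : ℝ}

/-- The step function `s ↦ (d^γ / V_k)^{1/2}`, `k = ⌊ds⌋`. With `V` the variances of the unit-mesh
increments and `γ = 2β - α`, it carries the normalization of the increments on the grid of
mesh `1/d`. -/
def gridWeight (V : ℕ → ℝ) (γ : ℝ) (d : ℕ) (s : ℝ) : ℝ :=
  √((d : ℝ) ^ γ / V ⌊d * s⌋₊)

lemma measurable_gridWeight (V : ℕ → ℝ) (γ : ℝ) (d : ℕ) : Measurable (gridWeight V γ d) := by
  have : Measurable fun s : ℝ => V ⌊d * s⌋₊ :=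
    measurable_from_nat.comp (Nat.measurable_floor.comp (by fun_prop))
  unfold gridWeight
  fun_prop

lemma tendsto_gridWeight (hV : Tendsto (fun k : ℕ => V k / (k : ℝ) ^ γ) atTop (nhds c))
    (hc : c ≠ 0) (hs : 0 < s) :
    Tendsto (fun d => gridWeight V γ d s) atTop (nhds √((c * s ^ γ)⁻¹)) := by
  have hfloor : Tendsto (fun d : ℕ => ⌊d * s⌋₊) atTop atTop :=
    tendsto_nat_floor_atTop.comp (tendsto_natCast_atTop_atTop.atTop_mul_const hs)
  have hratio : Tendsto (fun d : ℕ => (⌊d * s⌋₊ : ℝ) / d) atTop (nhds s) := by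
    simpa only [mul_comm s, Function.comp_def] using
      (tendsto_nat_floor_mul_div_atTop hs.le).comp (tendsto_natCast_atTop_atTop (R := ℝ))
  have hprod := (hV.comp hfloor).mul (hratio.rpow_const (p := γ) (.inl hs.ne'))
  refine ((hprod.inv₀ (mul_ne_zero hc (Real.rpow_pos_of_pos hs γ).ne')).sqrt).congr' ?_
  filter_upwards [eventually_one_le_floor_mul hs] with d hd
  have hk : ((⌊d * s⌋₊ : ℕ) : ℝ) ^ γ ≠ 0 := (Real.rpow_pos_of_pos (Nat.cast_pos.2 hd) γ).ne'
  rw [gridWeight, Function.comp_apply, Real.div_rpow (Nat.cast_nonneg _) (Nat.cast_nonneg _),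
    div_mul_div_cancel₀ hk, inv_div]

lemma exists_succ_rpow_le_mul (hV : Tendsto (fun k : ℕ => V k / (k : ℝ) ^ γ) atTop (nhds c))
    (hc : c ≠ 0) (hpos : ∀ k, 0 < V k) : ∃ M, ∀ k : ℕ, ((k : ℝ) + 1) ^ γ ≤ M * V k := by
  have hratio : Tendsto (fun k : ℕ => (((k : ℝ) + 1) / k) ^ γ) atTop (nhds (1 ^ γ)) :=
    tendsto_succ_div_self.rpow_const (.inl one_ne_zero)
  have hlim : Tendsto (fun k : ℕ => ((k : ℝ) + 1) ^ γ / V k) atTop (nhds (1 ^ γ / c)) := by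
    refine (hratio.div hV hc).congr' ?_
    filter_upwards [eventually_gt_atTop 0] with k hk
    have hk' : (0 : ℝ) < k := Nat.cast_pos.2 hk
    rw [Pi.div_apply, Real.div_rpow (by positivity : (0 : ℝ) ≤ k + 1) hk'.le,
      div_div_div_cancel_right₀ (Real.rpow_pos_of_pos hk' γ).ne']
  obtain ⟨M, hM⟩ := hlim.bddAbove_range
  exact ⟨M, fun k => (div_le_iff₀ (hpos k)).1 (hM (Set.mem_range_self k))⟩

lemma exists_gridWeight_le (hV : Tendsto (fun k : ℕ => V k / (k : ℝ) ^ γ) atTop (nhds c))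
    (hc : c ≠ 0) (hpos : ∀ k, 0 < V k) (hγ : 0 ≤ γ) :
    ∃ M, 0 ≤ M ∧ ∀ (d : ℕ) (s : ℝ), 0 < s → gridWeight V γ d s * √(s ^ γ) ≤ M := by
  obtain ⟨M, hMV⟩ := exists_succ_rpow_le_mul hV hc hpos
  refine ⟨√M, Real.sqrt_nonneg M, fun d s hs => ?_⟩
  rw [gridWeight, ← Real.sqrt_mul (div_nonneg (by positivity) (hpos _).le)]
  refine Real.sqrt_le_sqrt ?_
  calc (d : ℝ) ^ γ / V ⌊d * s⌋₊ * s ^ γ = (d * s) ^ γ / V ⌊d * s⌋₊ := by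
        rw [Real.mul_rpow d.cast_nonneg hs.le]
        ring
    _ ≤ (⌊d * s⌋₊ + 1) ^ γ / V ⌊d * s⌋₊ := by
        have := hpos ⌊d * s⌋₊
        have := Nat.lt_floor_add_one (d * s)
        gcongr
    _ ≤ M := (div_le_iff₀ (hpos _)).2 (hMV _)

end GridWeights

section ScalingLimit

variable {β α C c x : ℝ} {φ φ' φ'' : ℝ → ℝ}

lemma rectIncr_covR_mul {a s₁ s₂ t₁ t₂ : ℝ} (ha : 0 < a) (hs₁ : 0 ≤ s₁) (hs₂ : 0 ≤ s₂)
    (ht₁ : 0 ≤ t₁) (ht₂ : 0 ≤ t₂) :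
    rectIncr (covR β φ) (a * s₁) (a * s₂) (a * t₁) (a * t₂) =
      a ^ (2 * β) * rectIncr (covR β φ) s₁ s₂ t₁ t₂ := by
  simp only [rectIncr, covR_mul_mul, ha, hs₁, hs₂, ht₁, ht₂]
  ring

lemma gridIncr_covR_self {d : ℕ} (hd : 0 < d) (k l : ℕ) :
    gridIncr (covR β φ) d d k l = covΔ β φ k l / (d : ℝ) ^ (2 * β) := by
  have hd' : (0 : ℝ) < (d : ℝ)⁻¹ := inv_pos.2 (Nat.cast_pos.2 hd)
  simp only [gridIncr, div_eq_inv_mul]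
  rw [rectIncr_covR_mul hd' (by positivity) (by positivity) (by positivity) (by positivity),
    Real.inv_rpow d.cast_nonneg]
  rfl

lemma covΔ_self {k : ℕ} (hk : 0 < k) :
    covΔ β φ k k = (k : ℝ) ^ (2 * β) *
      (φ 1 * (((k + 1 : ℝ) / k) ^ (2 * β) + 1) - 2 * φ ((k + 1) / k)) := by
  have hk' : (0 : ℝ) < k := Nat.cast_pos.2 hk
  have hk₁ : (0 : ℝ) < k + 1 := by positivity
  have hle : (k : ℝ) ≤ k + 1 := by linarith
  rw [covΔ, covR_comm β φ (k + 1) k, covR_of_le hk' hle, covR_of_le hk' le_rfl,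
    covR_of_le hk₁ le_rfl, div_self hk'.ne', div_self hk₁.ne', Real.div_rpow hk₁.le hk'.le]
  field_simp
  ring

lemma tendsto_covΔ_self_div_rpow
    (hdiag : Tendsto (fun y => (φ 1 * (y ^ (2 * β) + 1) - 2 * φ y) / (y - 1) ^ α)
      (nhdsWithin 1 (Set.Ioi 1)) (nhds c)) :
    Tendsto (fun k : ℕ => covΔ β φ k k / (k : ℝ) ^ (2 * β - α)) atTop (nhds c) := by
  have hsucc : Tendsto (fun k : ℕ => ((k : ℝ) + 1) / k) atTop (nhdsWithin 1 (Set.Ioi 1)) := by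
    refine tendsto_nhdsWithin_iff.2 ⟨tendsto_succ_div_self, ?_⟩
    filter_upwards [eventually_gt_atTop 0] with k hk
    exact Set.mem_Ioi.2 ((one_lt_div (Nat.cast_pos.2 hk)).2 (lt_add_one _))
  refine (hdiag.comp hsucc).congr' ?_
  filter_upwards [eventually_gt_atTop 0] with k hk
  have hk' : (0 : ℝ) < k := Nat.cast_pos.2 hk
  rw [Function.comp_apply, covΔ_self hk, Real.rpow_sub hk', div_sub_one hk'.ne',
    add_sub_cancel_left, one_div, Real.inv_rpow hk'.le]
  field_simp

/-- The kernel whose averages over the cells of the grids of mesh `1/d` and `1/e` are the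
correlations of the increments, up to normalization; `(d, e) = κ`. -/
def gridKernel (β α : ℝ) (φ φ' φ'' : ℝ → ℝ) (κ : ℕ × ℕ) (p : ℝ × ℝ) : ℝ :=
  gridWeight (fun k => covΔ β φ k k) (2 * β - α) κ.1 p.1 *
    gridWeight (fun k => covΔ β φ k k) (2 * β - α) κ.2 p.2 *
      covR (β - 1) (mixedProfile β φ' φ'') p.1 p.2

lemma measurable_gridKernel (hmeas : Measurable (mixedProfile β φ' φ'')) (κ : ℕ × ℕ) :
    Measurable (gridKernel β α φ φ' φ'' κ) :=
  (((measurable_gridWeight _ _ _).comp measurable_fst).mul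
    ((measurable_gridWeight _ _ _).comp measurable_snd)).mul (measurable_covR hmeas)

lemma exists_abs_gridKernel_le
    (hC : ∀ y, 1 < y → |mixedProfile β φ' φ'' y| ≤ C * (y - 1) ^ (α - 2))
    (hpos : ∀ k, 0 < covΔ β φ k k) (hc : c ≠ 0)
    (hdiag : Tendsto (fun k : ℕ => covΔ β φ k k / (k : ℝ) ^ (2 * β - α)) atTop (nhds c))
    (hαβ : α ≤ 2 * β) :
    ∃ M, ∀ (κ : ℕ × ℕ) (p : ℝ × ℝ), 0 < p.1 → 0 < p.2 → p.1 ≠ p.2 →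
      |gridKernel β α φ φ' φ'' κ p| ≤ M * |p.1 - p.2| ^ (α - 2) := by
  have hγ : 0 ≤ 2 * β - α := sub_nonneg.2 hαβ
  have hC₀ : 0 ≤ C := nonneg_of_abs_le_mul_sub_rpow hC
  obtain ⟨M, hM, hMw⟩ := exists_gridWeight_le hdiag hc hpos hγ
  refine ⟨M * M * C, fun κ p hs ht hst => ?_⟩
  set w := gridWeight (fun k => covΔ β φ k k) (2 * β - α)
  have hw : ∀ d s, 0 ≤ w d s := fun d s => Real.sqrt_nonneg _
  have hK := abs_covR_le (β := β - 1) hC hs ht hst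
  rw [show 2 * (β - 1) - (α - 2) = 2 * β - α by ring] at hK
  have hmin : min p.1 p.2 ^ (2 * β - α) ≤ √(p.1 ^ (2 * β - α)) * √(p.2 ^ (2 * β - α)) := by
    rw [← Real.sqrt_mul (by positivity)]
    refine Real.le_sqrt_of_sq_le ?_
    rw [pow_two]
    gcongr
    exacts [min_le_left _ _, min_le_right _ _]
  calc |gridKernel β α φ φ' φ'' κ p|
      = w κ.1 p.1 * w κ.2 p.2 * |covR (β - 1) (mixedProfile β φ' φ'') p.1 p.2| := by
        rw [gridKernel, abs_mul, abs_of_nonneg (mul_nonneg (hw _ _) (hw _ _))]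
    _ ≤ w κ.1 p.1 * w κ.2 p.2 * (C * (√(p.1 ^ (2 * β - α)) * √(p.2 ^ (2 * β - α))) *
          |p.1 - p.2| ^ (α - 2)) := by
        have := hw κ.1 p.1
        have := hw κ.2 p.2
        exact mul_le_mul_of_nonneg_left (hK.trans (by gcongr)) (by positivity)
    _ = (w κ.1 p.1 * √(p.1 ^ (2 * β - α))) * (w κ.2 p.2 * √(p.2 ^ (2 * β - α))) * C *
          |p.1 - p.2| ^ (α - 2) := by ring
    _ ≤ M * M * C * |p.1 - p.2| ^ (α - 2) := by
        gcongr
        exacts [mul_nonneg (hw _ _) (Real.sqrt_nonneg _), hMw _ _ hs, hMw _ _ ht]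

lemma isFiniteMeasure_restrict_Ioc_prod (b : ℝ) :
    IsFiniteMeasure (volume.restrict (Set.Ioc 0 b ×ˢ Set.Ioc 0 b : Set (ℝ × ℝ))) :=
  isFiniteMeasure_restrict.2
    ((Metric.isBounded_Ioc _ _).prod (Metric.isBounded_Ioc _ _)).measure_lt_top.ne

lemma setIntegral_gridKernel (h : IsRegularProfile β φ φ' φ'')
    (hmeas : Measurable (mixedProfile β φ' φ''))
    (hC : ∀ y, 1 < y → |mixedProfile β φ' φ'' y| ≤ C * (y - 1) ^ (α - 2))
    (hα : 3 / 2 < α) (hαβ : α ≤ 2 * β) {d e k l : ℕ} (hd : 0 < d) (he : 0 < e)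
    (hk : k ∈ Finset.Icc 1 ⌊d * x⌋₊) (hl : l ∈ Finset.Icc 1 ⌊e * x⌋₊) :
    ∫ p in Set.Ico ((k : ℝ) / d) ((k + 1) / d) ×ˢ Set.Ico ((l : ℝ) / e) ((l + 1) / e),
        gridKernel β α φ φ' φ'' (d, e) p =
      √((d : ℝ) ^ (2 * β - α) / covΔ β φ k k) * √((e : ℝ) ^ (2 * β - α) / covΔ β φ l l) *
        gridIncr (covR β φ) d e k l := by
  have hk₀ : k ≠ 0 := Nat.one_le_iff_ne_zero.1 (Finset.mem_Icc.1 hk).1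
  have hl₀ : l ≠ 0 := Nat.one_le_iff_ne_zero.1 (Finset.mem_Icc.1 hl).1
  have hint : IntegrableOn (fun p : ℝ × ℝ => covR (β - 1) (mixedProfile β φ' φ'') p.1 p.2)
      (Set.Ico ((k : ℝ) / d) ((k + 1) / d) ×ˢ Set.Ico ((l : ℝ) / e) ((l + 1) / e)) := by
    have := isFiniteMeasure_restrict_Ioc_prod (x + 1)
    exact IntegrableOn.mono_set ((memLp_two_covR (by linarith) (by linarith) hmeas
      hC).integrable one_le_two) (Set.prod_mono (Ico_grid_subset hd hk) (Ico_grid_subset he hl))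
  rw [gridIncr, h.rectIncr_covR (by positivity) (by gcongr; linarith) (by positivity)
    (by gcongr; linarith) hint, ← integral_const_mul]
  refine setIntegral_congr_fun (measurableSet_Ico.prod measurableSet_Ico) fun p hp => ?_
  rw [← preimage_floor_mul_singleton hd hk₀, ← preimage_floor_mul_singleton he hl₀] at hp
  simp only [gridKernel, gridWeight, show ⌊d * p.1⌋₊ = k from hp.1, show ⌊e * p.2⌋₊ = l from hp.2]

lemma sqCorrSum_eq_fiberEnergy (h : IsRegularProfile β φ φ' φ'')
    (hmeas : Measurable (mixedProfile β φ' φ''))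
    (hC : ∀ y, 1 < y → |mixedProfile β φ' φ'' y| ≤ C * (y - 1) ^ (α - 2))
    (hpos : ∀ k, 0 < covΔ β φ k k) (hα : 3 / 2 < α) (hαβ : α ≤ 2 * β)
    {d e : ℕ} (hd : 0 < d) (he : 0 < e) :
    sqCorrSum (covR β φ) α x d e =
      fiberEnergy (volume.restrict (Set.Ioc 0 (x + 1) ×ˢ Set.Ioc 0 (x + 1))) (gridIndex (d, e))
        (gridRange x (d, e)) (gridKernel β α φ φ' φ'' (d, e)) := by
  have hscale : ∀ {d : ℕ}, 0 < d →
      (d : ℝ) ^ (1 - α) * (d : ℝ) ^ (2 * β) = d * (d : ℝ) ^ (2 * β - α) := fun {d} hd => by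
    have hd' : (0 : ℝ) < d := Nat.cast_pos.2 hd
    rw [← Real.rpow_add hd', ← Real.rpow_one_add' hd'.le (by linarith)]
    ring_nf
  rw [fiberEnergy_gridIndex hd he, sqCorrSum]
  simp only [Finset.mul_sum]
  refine Finset.sum_congr rfl fun k hk => Finset.sum_congr rfl fun l hl => ?_
  rw [setIntegral_gridKernel h hmeas hC hα hαβ hd he hk hl, gridIncr_covR_self hd,
    gridIncr_covR_self he, mul_pow, mul_pow,
    Real.sq_sqrt (div_nonneg (by positivity) (hpos k).le),
    Real.sq_sqrt (div_nonneg (by positivity) (hpos l).le)]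
  calc _ = ((d : ℝ) ^ (1 - α) * (d : ℝ) ^ (2 * β)) * ((e : ℝ) ^ (1 - α) * (e : ℝ) ^ (2 * β)) *
        (gridIncr (covR β φ) d e k l ^ 2 / (covΔ β φ k k * covΔ β φ l l)) := by
        field_simp
    _ = _ := by
        rw [hscale hd, hscale he]
        field_simp

theorem exists_tendsto_sqCorrSum (h : IsRegularProfile β φ φ' φ'')
    (hmeas : Measurable (mixedProfile β φ' φ''))
    (hC : ∀ y, 1 < y → |mixedProfile β φ' φ'' y| ≤ C * (y - 1) ^ (α - 2))
    (hpos : ∀ k, 0 < covΔ β φ k k) (hc : c ≠ 0)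
    (hdiag : Tendsto (fun k : ℕ => covΔ β φ k k / (k : ℝ) ^ (2 * β - α)) atTop (nhds c))
    (hα : 3 / 2 < α) (hαβ : α ≤ 2 * β) (x : ℝ) :
    ∃ L, Tendsto (fun p : ℕ × ℕ => sqCorrSum (covR β φ) α x p.1 p.2) (atTop ×ˢ atTop)
      (nhds L) := by
  set μ : Measure (ℝ × ℝ) := volume.restrict (Set.Ioc 0 (x + 1) ×ˢ Set.Ioc 0 (x + 1))
  have : IsFiniteMeasure μ := isFiniteMeasure_restrict_Ioc_prod (x + 1)
  have hμpos : ∀ᵐ p ∂μ, 0 < p.1 ∧ 0 < p.2 :=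
    (ae_restrict_mem (measurableSet_Ioc.prod measurableSet_Ioc)).mono
      fun p hp => ⟨hp.1.1, hp.2.1⟩
  obtain ⟨M, hM⟩ := exists_abs_gridKernel_le hC hpos hc hdiag hαβ
  have hdom : MemLp (fun p : ℝ × ℝ => M * |p.1 - p.2| ^ (α - 2)) 2 μ :=
    (memLp_two_abs_sub_rpow (by linarith)
      ((Metric.isBounded_Ioc _ _).prod (Metric.isBounded_Ioc _ _))).const_mul M
  have hlim := (isFinePartition_grid hμpos x).tendsto_fiberEnergy_of_dominated
    (measurableSet_Ioc.prod measurableSet_Ioc)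
    (fun κ => (measurable_gridKernel (α := α) (φ := φ) hmeas κ).aestronglyMeasurable) hdom
    (.of_forall fun κ => by
      filter_upwards [hμpos, ae_restrict_of_ae ae_fst_ne_snd] with p hp hne
        using hM κ p hp.1 hp.2 hne)
    (by
      filter_upwards [hμpos] with p hp
      exact (((tendsto_gridWeight hdiag hc hp.1).comp tendsto_fst).mul
        ((tendsto_gridWeight hdiag hc hp.2).comp tendsto_snd)).mul_const _)
  refine ⟨_, hlim.congr' ?_⟩
  filter_upwards [(eventually_gt_atTop 0).prod_mk (eventually_gt_atTop 0)] with κ hκ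
  exact (sqCorrSum_eq_fiberEnergy h hmeas hC hpos hα hαβ hκ.1 hκ.2).symm

end ScalingLimit

/-- for `3/2 < α < 2`, each sequence `(Ŵ_{ij}(⌊dx⌋))_{d ≥ 1}` is
Cauchy in `L²(Ω)`. -/
theorem hatW_cauchy_in_L2 (β lam α ν : ℝ) (φ ψ : ℝ → ℝ)
    (hyp : SelfSimilarHyp β lam α ν φ ψ)
    (hα1 : 3 / 2 < α) (hα2 : α < 2)
    (a b x : ℝ) (ha : 0 < a) (hab : a < b) (hx : x ∈ Set.Icc a b)
    (n : ℕ) {Ω : Type*} [MeasurableSpace Ω] (P : Measure Ω) [IsProbabilityMeasure P]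
    (X : Fin n → ℝ → Ω → ℝ)
    (hmeas : ∀ (i : Fin n) (t : ℝ), Measurable (X i t))
    (hgauss : IsCenteredGaussianFamily P (fun p : Fin n × ℝ => X p.1 p.2))
    (hcov : ∀ (i j : Fin n) (s t : ℝ), 0 ≤ s → 0 ≤ t →
      ∫ ω, X i s ω * X j t ω ∂P = if i = j then covR β φ s t else 0)
    (hpos : ∀ (i : Fin n) (k d : ℕ), 1 ≤ d →
      0 < ∫ ω, (X i (((k : ℝ) + 1) / d) ω - X i ((k : ℝ) / d) ω) ^ 2 ∂P) :
    ∀ i j : Fin n, ∀ ε : ℝ, 0 < ε → ∃ N : ℕ, ∀ d₁ d₂ : ℕ, N ≤ d₁ → N ≤ d₂ →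
      ∫ ω, (hatW P X α x d₁ i j ω - hatW P X α x d₂ i j ω) ^ 2 ∂P < ε := by
  intro i j ε hε
  have hV := hgauss.isCenteredGaussianSpace_span
  have hX : ∀ i t, X i t ∈ Submodule.span ℝ (Set.range fun p : Fin n × ℝ => X p.1 p.2) :=
    fun i t => Submodule.subset_span ⟨(i, t), rfl⟩
  have hincr : ∀ d k, 0 < d → 0 < gridIncr (covR β φ) d d k k := fun d k hd =>
    integral_incr_sq hV hX hcov i d k ▸ hpos i k d hd
  have hΔ : ∀ k, 0 < covΔ β φ k k := fun k => by
    simpa [gridIncr_covR_self one_pos] using hincr 1 k one_pos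
  obtain ⟨C, hC⟩ := hyp.exists_abs_mixedProfile_le (by linarith) hα2.le
  obtain ⟨L, hL⟩ := exists_tendsto_sqCorrSum (hyp.isRegularProfile (by linarith))
    (SelfSimilarHyp.measurable_mixedProfile β lam α ψ) hC hΔ (mul_pos two_pos hyp.2.1).ne'
    (tendsto_covΔ_self_div_rpow (hyp.tendsto_diagonal (by linarith) hα2)) hα1 hyp.2.2.1.2 x
  have hlim := tendsto_integral_sq_hatW_sub hV hX hcov hincr hL i j
  rw [prod_atTop_atTop_eq] at hlim
  exact eventually_atTop_prod_self.1 (hlim.eventually_lt_const hε)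
end
end

section
/- There exists a universal constant C > 0 such that for every integer d ≥ 1 and every function a : ℤ → ℝ, Σ_{k,l,m,p=1}^{d} |a(k−l)| · |a(m−p)| · |a(k−m)| · |a(l−p)| ≤ C d (Σ_{m=−d+1}^{d−1} |a(m)|^{4/3})³. -/
/-!
The four factors run around the 4-cycle `k → l → p → m → k`. By AM-GM, a product of four numbers is
at most the average of the four products of three of their `4/3`-th powers, so deleting one edge of
the cycle at a time leaves sums along paths with three edges. A path is summed one vertex at a time,
starting from its end: each edge costs a factor `∑ x, |a x| ^ (4/3)`, and the first vertex is free.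
-/

open Finset

section OrderedSums

variable {ι R : Type*} [CommSemiring R] [PartialOrder R] [IsOrderedRing R] {s : Finset ι}

theorem sum_mul_le_mul_of_sum_le {u v : ι → R} {A B : R} (hu : ∀ i ∈ s, 0 ≤ u i) (hB : 0 ≤ B)
    (hA : ∑ i ∈ s, u i ≤ A) (hv : ∀ i ∈ s, v i ≤ B) : ∑ i ∈ s, u i * v i ≤ A * B :=
  calc ∑ i ∈ s, u i * v i
      ≤ ∑ i ∈ s, u i * B := sum_le_sum fun i hi ↦ mul_le_mul_of_nonneg_left (hv i hi) (hu i hi)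
    _ = (∑ i ∈ s, u i) * B := (sum_mul ..).symm
    _ ≤ A * B := mul_le_mul_of_nonneg_right hA hB

theorem sum_path_le_card_mul_pow {f g h : ι → ι → R} {B : R}
    (hf : ∀ x ∈ s, ∀ y ∈ s, 0 ≤ f x y) (hg : ∀ x ∈ s, ∀ y ∈ s, 0 ≤ g x y)
    (hfB : ∀ x ∈ s, ∑ y ∈ s, f x y ≤ B) (hgB : ∀ x ∈ s, ∑ y ∈ s, g x y ≤ B)
    (hhB : ∀ x ∈ s, ∑ y ∈ s, h x y ≤ B) :
    ∑ x ∈ s, ∑ y ∈ s, ∑ z ∈ s, ∑ w ∈ s, f x y * g y z * h z w ≤ #s * B ^ 3 := by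
  have from_vertex : ∀ x ∈ s, ∑ y ∈ s, f x y * ∑ z ∈ s, g y z * ∑ w ∈ s, h z w ≤ B ^ 3 := by
    intro x hx
    have hB : 0 ≤ B := (sum_nonneg (hf x hx)).trans (hfB x hx)
    calc ∑ y ∈ s, f x y * ∑ z ∈ s, g y z * ∑ w ∈ s, h z w
        ≤ B * (B * B) :=
          sum_mul_le_mul_of_sum_le (hf x hx) (mul_nonneg hB hB) (hfB x hx) fun y hy ↦
            sum_mul_le_mul_of_sum_le (hg y hy) hB (hgB y hy) hhB
      _ = B ^ 3 := by ring
  simpa only [mul_sum, mul_assoc, nsmul_eq_mul] using sum_le_card_nsmul s _ _ from_vertex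

end OrderedSums

theorem sum_rotate {α β γ δ M : Type*} [AddCommMonoid M] {s : Finset α} {t : Finset β}
    {u : Finset γ} {v : Finset δ} (F : α → β → γ → δ → M) :
    ∑ x ∈ s, ∑ y ∈ t, ∑ z ∈ u, ∑ w ∈ v, F x y z w =
      ∑ y ∈ t, ∑ z ∈ u, ∑ w ∈ v, ∑ x ∈ s, F x y z w :=
  sum_comm.trans <| sum_congr rfl fun _ _ ↦ sum_comm_cycle.symm

theorem sum_comp_le_sum_of_injOn {ι κ M : Type*} [AddCommMonoid M] [PartialOrder M]
    [IsOrderedAddMonoid M] {s : Finset ι} {t : Finset κ} {e : ι → κ} {φ : κ → M}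
    (he : Set.InjOn e s) (hst : ∀ i ∈ s, e i ∈ t) (hφ : ∀ j ∈ t, 0 ≤ φ j) :
    ∑ i ∈ s, φ (e i) ≤ ∑ j ∈ t, φ j := by
  classical
  rw [← sum_image he]
  exact sum_le_sum_of_subset_of_nonneg (image_subset_iff.2 hst) fun j hj _ ↦ hφ j hj

theorem mul_mul_mul_le_sum_rpow_four_thirds {a b c d : ℝ} (ha : 0 ≤ a) (hb : 0 ≤ b) (hc : 0 ≤ c)
    (hd : 0 ≤ d) :
    a * b * c * d ≤ 1 / 4 *
      (a ^ (4 / 3 : ℝ) * b ^ (4 / 3 : ℝ) * c ^ (4 / 3 : ℝ) +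
        b ^ (4 / 3 : ℝ) * c ^ (4 / 3 : ℝ) * d ^ (4 / 3 : ℝ) +
        c ^ (4 / 3 : ℝ) * d ^ (4 / 3 : ℝ) * a ^ (4 / 3 : ℝ) +
        d ^ (4 / 3 : ℝ) * a ^ (4 / 3 : ℝ) * b ^ (4 / 3 : ℝ)) := by
  have mul_rpow_mul {x y z : ℝ} (hx : 0 ≤ x) (hy : 0 ≤ y) (hz : 0 ≤ z) (r : ℝ) :
      (x * y * z) ^ r = x ^ r * y ^ r * z ^ r := by
    rw [Real.mul_rpow (mul_nonneg hx hy) hz, Real.mul_rpow hx hy]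
  have cube_root {x : ℝ} (hx : 0 ≤ x) : x ^ (1 / 3 : ℝ) = (x ^ (4 / 3 : ℝ)) ^ (1 / 4 : ℝ) := by
    rw [← Real.rpow_mul hx]
    norm_num
  have habc := mul_nonneg (mul_nonneg ha hb) hc
  have hbcd := mul_nonneg (mul_nonneg hb hc) hd
  have hcda := mul_nonneg (mul_nonneg hc hd) ha
  have hdab := mul_nonneg (mul_nonneg hd ha) hb
  rw [← mul_rpow_mul ha hb hc, ← mul_rpow_mul hb hc hd, ← mul_rpow_mul hc hd ha,
    ← mul_rpow_mul hd ha hb]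
  calc a * b * c * d
      = ((a * b * c * d) ^ 3) ^ (1 / 3 : ℝ) := by
        rw [← Real.rpow_natCast, ← Real.rpow_mul (mul_nonneg habc hd)]
        norm_num
    _ = ((a * b * c) * (b * c * d) * (c * d * a) * (d * a * b)) ^ (1 / 3 : ℝ) := by ring_nf
    _ = ((a * b * c) ^ (4 / 3 : ℝ)) ^ (1 / 4 : ℝ) * ((b * c * d) ^ (4 / 3 : ℝ)) ^ (1 / 4 : ℝ) *
          ((c * d * a) ^ (4 / 3 : ℝ)) ^ (1 / 4 : ℝ) *
          ((d * a * b) ^ (4 / 3 : ℝ)) ^ (1 / 4 : ℝ) := by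
        rw [Real.mul_rpow (by positivity) hdab, mul_rpow_mul habc hbcd hcda, cube_root habc,
          cube_root hbcd, cube_root hcda, cube_root hdab]
    _ ≤ 1 / 4 * (a * b * c) ^ (4 / 3 : ℝ) + 1 / 4 * (b * c * d) ^ (4 / 3 : ℝ) +
          1 / 4 * (c * d * a) ^ (4 / 3 : ℝ) + 1 / 4 * (d * a * b) ^ (4 / 3 : ℝ) := by
        apply Real.geom_mean_le_arith_mean4_weighted <;> first | positivity | norm_num
    _ = _ := by ring

theorem sum_cycle_le_card_mul_pow {ι : Type*} {s : Finset ι} {f g h q : ι → ι → ℝ} {B : ℝ}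
    (hf : ∀ x ∈ s, ∑ y ∈ s, |f x y| ^ (4 / 3 : ℝ) ≤ B)
    (hg : ∀ x ∈ s, ∑ y ∈ s, |g x y| ^ (4 / 3 : ℝ) ≤ B)
    (hh : ∀ x ∈ s, ∑ y ∈ s, |h x y| ^ (4 / 3 : ℝ) ≤ B)
    (hq : ∀ x ∈ s, ∑ y ∈ s, |q x y| ^ (4 / 3 : ℝ) ≤ B) :
    ∑ x ∈ s, ∑ y ∈ s, ∑ z ∈ s, ∑ w ∈ s, |f x y| * |g y z| * |h z w| * |q w x| ≤ #s * B ^ 3 := by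
  have nonneg (r : ι → ι → ℝ) : ∀ x ∈ s, ∀ y ∈ s, 0 ≤ |r x y| ^ (4 / 3 : ℝ) :=
    fun _ _ _ _ ↦ by positivity
  have path_fgh := sum_path_le_card_mul_pow (nonneg f) (nonneg g) hf hg hh
  have path_ghq : ∑ x ∈ s, ∑ y ∈ s, ∑ z ∈ s, ∑ w ∈ s,
      |g y z| ^ (4 / 3 : ℝ) * |h z w| ^ (4 / 3 : ℝ) * |q w x| ^ (4 / 3 : ℝ) ≤ #s * B ^ 3 :=
    (sum_rotate _).trans_le <| sum_path_le_card_mul_pow (nonneg g) (nonneg h) hg hh hq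
  have path_hqf : ∑ x ∈ s, ∑ y ∈ s, ∑ z ∈ s, ∑ w ∈ s,
      |h z w| ^ (4 / 3 : ℝ) * |q w x| ^ (4 / 3 : ℝ) * |f x y| ^ (4 / 3 : ℝ) ≤ #s * B ^ 3 :=
    ((sum_rotate _).trans (sum_rotate _)).trans_le <|
      sum_path_le_card_mul_pow (nonneg h) (nonneg q) hh hq hf
  have path_qfg : ∑ x ∈ s, ∑ y ∈ s, ∑ z ∈ s, ∑ w ∈ s,
      |q w x| ^ (4 / 3 : ℝ) * |f x y| ^ (4 / 3 : ℝ) * |g y z| ^ (4 / 3 : ℝ) ≤ #s * B ^ 3 :=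
    le_of_eq_of_le (sum_rotate _).symm <|
      sum_path_le_card_mul_pow (nonneg q) (nonneg f) hq hf hg
  have amgm := sum_le_sum fun x (_ : x ∈ s) ↦ sum_le_sum fun y (_ : y ∈ s) ↦
    sum_le_sum fun z (_ : z ∈ s) ↦ sum_le_sum fun w (_ : w ∈ s) ↦
      mul_mul_mul_le_sum_rpow_four_thirds (abs_nonneg (f x y)) (abs_nonneg (g y z))
        (abs_nonneg (h z w)) (abs_nonneg (q w x))
  simp only [← mul_sum, sum_add_distrib] at amgm path_fgh
  linarith

theorem fourth_moment_young_inequality_general {G : Type*} [AddGroup G] {s t : Finset G}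
    (hst : ∀ x ∈ s, ∀ y ∈ s, x - y ∈ t) (a : G → ℝ) :
    ∑ k ∈ s, ∑ l ∈ s, ∑ m ∈ s, ∑ p ∈ s, |a (k - l)| * |a (m - p)| * |a (k - m)| * |a (l - p)|
      ≤ #s * (∑ x ∈ t, |a x| ^ ((4 : ℝ) / 3)) ^ 3 := by
  have nonneg : ∀ x ∈ t, 0 ≤ |a x| ^ (4 / 3 : ℝ) := fun _ _ ↦ by positivity
  have row (x : G) (hx : x ∈ s) :
      ∑ y ∈ s, |a (x - y)| ^ (4 / 3 : ℝ) ≤ ∑ z ∈ t, |a z| ^ (4 / 3 : ℝ) :=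
    sum_comp_le_sum_of_injOn sub_right_injective.injOn (hst x hx) nonneg
  have column (y : G) (hy : y ∈ s) :
      ∑ x ∈ s, |a (x - y)| ^ (4 / 3 : ℝ) ≤ ∑ z ∈ t, |a z| ^ (4 / 3 : ℝ) :=
    sum_comp_le_sum_of_injOn sub_left_injective.injOn (fun x hx ↦ hst x hx y hy) nonneg
  calc _ = ∑ k ∈ s, ∑ l ∈ s, ∑ p ∈ s, ∑ m ∈ s,
          |a (k - l)| * |a (l - p)| * |a (m - p)| * |a (k - m)| := by
        refine sum_congr rfl fun k _ ↦ sum_congr rfl fun l _ ↦ sum_comm.trans <|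
          sum_congr rfl fun p _ ↦ sum_congr rfl fun m _ ↦ ?_
        ring
    _ ≤ _ := sum_cycle_le_card_mul_pow (f := fun k l ↦ a (k - l)) (g := fun l p ↦ a (l - p))
        (h := fun p m ↦ a (m - p)) (q := fun m k ↦ a (k - m)) row row column column

/-- there is a universal constant `C > 0` such that for every
integer `d ≥ 1` and every `a : ℤ → ℝ`,
`Σ_{k,l,m,p=1}^{d} |a(k−l)||a(m−p)||a(k−m)||a(l−p)|
  ≤ C d (Σ_{m=−d+1}^{d−1} |a(m)|^{4/3})³`. -/
theorem fourth_moment_young_inequality :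
    ∃ C : ℝ, 0 < C ∧ ∀ d : ℕ, 1 ≤ d → ∀ a : ℤ → ℝ,
      ∑ k ∈ Finset.Icc 1 d, ∑ l ∈ Finset.Icc 1 d, ∑ m ∈ Finset.Icc 1 d,
          ∑ p ∈ Finset.Icc 1 d,
            |a ((k : ℤ) - l)| * |a ((m : ℤ) - p)| * |a ((k : ℤ) - m)| *
              |a ((l : ℤ) - p)|
        ≤ C * d * (∑ m ∈ Finset.Icc (-(d : ℤ) + 1) ((d : ℤ) - 1),
            |a m| ^ ((4 : ℝ) / 3)) ^ 3 := by
  refine ⟨1, one_pos, fun d _ a ↦ ?_⟩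
  have hst : ∀ x ∈ (Icc 1 d).map Nat.castEmbedding, ∀ y ∈ (Icc 1 d).map Nat.castEmbedding,
      x - y ∈ Icc (-(d : ℤ) + 1) (d - 1) := by
    simp only [mem_map, mem_Icc, Nat.castEmbedding_apply]
    lia
  simpa only [sum_map, card_map, Nat.card_Icc, add_tsub_cancel_right, Nat.castEmbedding_apply,
    one_mul] using fourth_moment_young_inequality_general hst a
end
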